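/- arXiv:1009.0540 — 4 statements merged into one kernel-verified Lean document; each statement's English description precedes it below -/
import Mathlib

section
/- Steepening under the inviscid Burgers step (Lemma burstep): For κ, H, a, L > 0 with H/κ ≤ L/4 and a ≤ L/4, define φ(κ,H,a,·) : [0,L] → ℝ by φ(κ,H,a,x) = κx for 0 ≤ x ≤ δ := H/κ, φ(κ,H,a,x) = H for δ ≤ x ≤ L−a, and φ(κ,H,a,x) = (H/a)(L−x) for L−a ≤ x ≤ L. There exists an absolute constant c > 0 such that: if θ₀ : ℝ → ℝ is smooth, 2L-periodic, odd, with θ₀(L) = 0 and θ₀(x) ≥ φ(κ,H,a,x) for 0 ≤ x ≤ L, and if w : ℝ × [0,h] → ℝ is a classical C³ solution of ∂_t w = w ∂_x w with w(·,0) = θ₀, where h ≤ c/‖θ₀‖_{C³} (in particular κh < 1), then w(x,h) ≥ φ( κ/(1−κh), H, a + ‖θ₀‖_{L^∞} h, x ) for all 0 ≤ x ≤ L. -/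
/-!
A solution is constant along the straight characteristics `t ↦ (x₀ - w(x₀, t₀) (t - t₀), t)`, and
this has to be proved without continuity of `w` in `(x, t)` jointly. Where the slices `w(·, t)` are
Lipschitz uniformly in `t`, it follows from a maximum principle for the energy
`(w(x, t) - w(x₀, t₀))²`, weighted in time and penalized by the squared distance to the
characteristic. Transport along characteristics carries a Lipschitz bound of one slice to the later
slices for a short time, and by time reversal to the earlier ones, so by Baire category the set of
points without a uniform bound is empty.

The characteristics from `0` and `L` are vertical and confine those that end in `[0, L]`. Transport
by the value at the foot shears the ramp of slope `κ` to slope `κ / (1 - κ h)`. Values below the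
plateau height `H` move to the left by at most `H h`, which widens the descent by that amount.
-/

open Set MeasureTheory Filter Topology

noncomputable section

/-- The piecewise linear front profile on `[0,L]`: slope `κ` up to height `H` (reached at
`δ = H/κ`), a plateau at height `H` up to `L−a`, and linear descent to `0` at `L`. -/
def frontProfile (κ H a L x : ℝ) : ℝ :=
  if x ≤ H / κ then κ * x else if x ≤ L - a then H else (H / a) * (L - x)

open Metric
open scoped NNReal

lemma lipschitzOnWith_of_shift_eq {f g : ℝ → ℝ} {x₀ r σ : ℝ} {K : ℝ≥0}
    (hf : LipschitzOnWith K f (closedBall x₀ r)) (hσK : |σ| * K ≤ 1 / 2)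
    (hσf : ∀ y ∈ closedBall x₀ r, |σ * f y| ≤ r / 2)
    (hfg : ∀ y ∈ closedBall x₀ r, g (y - σ * f y) = f y) :
    LipschitzOnWith (2 * K) g (closedBall x₀ (r / 2)) := by
  have hsurj : closedBall x₀ (r / 2) ⊆ (fun y => y - σ * f y) '' closedBall x₀ r := by
    intro x hx
    have hr : 0 ≤ r := by linarith [dist_nonneg.trans (mem_closedBall.1 hx)]
    rw [Real.closedBall_eq_Icc] at hx hf hσf ⊢
    have hcont : ContinuousOn (fun y => y - σ * f y) (Icc (x₀ - r) (x₀ + r)) :=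
      continuousOn_id.sub (continuousOn_const.mul hf.continuousOn)
    refine intermediate_value_Icc (by linarith) hcont ⟨?_, ?_⟩
    · linarith [hx.1, neg_le_of_abs_le (hσf _ (left_mem_Icc.2 (by linarith)))]
    · linarith [hx.2, le_of_abs_le (hσf _ (right_mem_Icc.2 (by linarith)))]
  refine LipschitzOnWith.of_dist_le_mul fun x hx x' hx' => ?_
  obtain ⟨y, hy, rfl⟩ := hsurj hx
  obtain ⟨y', hy', rfl⟩ := hsurj hx'
  have hfy : |f y - f y'| ≤ K * |y - y'| := hf.dist_le_mul y hy y' hy'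
  have hexpand : |y - y'| ≤ 2 * |y - σ * f y - (y' - σ * f y')| := by
    have htri := abs_add_le (y - σ * f y - (y' - σ * f y')) (σ * (f y - f y'))
    rw [show y - σ * f y - (y' - σ * f y') + σ * (f y - f y') = y - y' by ring, abs_mul] at htri
    have hσd : |σ| * |f y - f y'| ≤ 1 / 2 * |y - y'| :=
      calc |σ| * |f y - f y'| ≤ |σ| * (K * |y - y'|) := by gcongr
        _ = |σ| * K * |y - y'| := by ring
        _ ≤ 1 / 2 * |y - y'| := by gcongr
    linarith
  simp only [hfg y hy, hfg y' hy', Real.dist_eq]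
  calc |f y - f y'| ≤ K * |y - y'| := hfy
    _ ≤ K * (2 * |y - σ * f y - (y' - σ * f y')|) := by gcongr
    _ = (2 * K : ℝ≥0) * |y - σ * f y - (y' - σ * f y')| := by push_cast; ring

lemma nonneg_of_isMaxOn_Icc {φ : ℝ → ℝ} {φ' a b t : ℝ} (ht : t ∈ Ioc a b)
    (hmax : IsMaxOn φ (Icc a b) t) (hφ : HasDerivWithinAt φ φ' (Icc a b) t) : 0 ≤ φ' := by
  have hcone : a - t ∈ posTangentConeAt (Icc a b) t :=
    sub_mem_posTangentConeAt_of_segment_subset <|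
      (convex_Icc a b).segment_subset (Ioc_subset_Icc_self ht) (left_mem_Icc.2 (ht.1.le.trans ht.2))
  have hle := hmax.localize.hasFDerivWithinAt_nonpos hφ.hasFDerivWithinAt hcone
  simp only [ContinuousLinearMap.toSpanSingleton_apply, smul_eq_mul] at hle
  exact nonneg_of_mul_nonpos_right hle (sub_neg.2 ht.1)

/-- A classical solution of the inviscid Burgers equation `∂ₜ w = w ∂ₓ w` on `ℝ × [0, h]`. The
function is `C¹` in space at each time and the equation holds pointwise, with one-sided time
derivatives at the endpoints; joint continuity in `(x, t)` is not part of the definition. -/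
structure IsBurgersSolution (w : ℝ → ℝ → ℝ) (h : ℝ) : Prop where
  contDiff : ∀ t ∈ Icc 0 h, ContDiff ℝ 1 fun x => w x t
  hasDerivWithinAt : ∀ x, ∀ t ∈ Icc 0 h,
    HasDerivWithinAt (fun s => w x s) (w x t * deriv (fun y => w y t) x) (Icc 0 h) t

/-- A point of space-time around which `w` is Lipschitz in space with a constant that is uniform
in time. This is the regularity under which characteristics can be followed. -/
def IsRegularPoint (w : ℝ → ℝ → ℝ) (h : ℝ) (p : ℝ × ℝ) : Prop :=
  ∃ r > 0, ∃ K : ℝ≥0, ∀ᶠ t in 𝓝[Icc 0 h] p.2, LipschitzOnWith K (fun x => w x t) (ball p.1 r)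

/-- The reflection of `w` under the symmetry `(w, t) ↦ (-w, h - t)` of the Burgers equation. -/
def timeReverse (w : ℝ → ℝ → ℝ) (h x t : ℝ) : ℝ :=
  -w x (h - t)

lemma isOpen_setOf_isRegularPoint (w : ℝ → ℝ → ℝ) (h : ℝ) :
    IsOpen {p | IsRegularPoint w h p} := by
  rw [isOpen_iff_eventually]
  rintro p ⟨r, hr, K, hK⟩
  have htime := (continuous_snd.tendsto p).eventually (eventually_nhds_nhdsWithin.2 hK)
  have hspace := (continuous_fst.tendsto p).eventually (ball_mem_nhds p.1 (half_pos hr))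
  filter_upwards [htime, hspace] with q hq hqr
  refine ⟨r / 2, half_pos hr, K, hq.mono fun _ ht => ht.mono (ball_subset_ball' ?_)⟩
  linarith [mem_ball.1 hqr]

lemma isRegularPoint_of_notMem_Icc {w : ℝ → ℝ → ℝ} {h x t : ℝ} (ht : t ∉ Icc 0 h) :
    IsRegularPoint w h (x, t) := by
  refine ⟨1, one_pos, 0, ?_⟩
  rw [← isClosed_Icc.closure_eq, mem_closure_iff_nhdsWithin_neBot, not_neBot] at ht
  simp [ht]

lemma tendsto_const_sub_nhdsWithin_Icc (a b c t : ℝ) :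
    Tendsto (fun s => c - s) (𝓝[Icc a b] t) (𝓝[Icc (c - b) (c - a)] (c - t)) :=
  ((continuous_const.sub continuous_id).tendsto t).inf <| tendsto_principal_principal.2
    fun _ hs => ⟨sub_le_sub_left hs.2 c, sub_le_sub_left hs.1 c⟩

lemma lipschitzOnWith_timeReverse_iff {w : ℝ → ℝ → ℝ} {h t : ℝ} {K : ℝ≥0} {s : Set ℝ} :
    LipschitzOnWith K (fun x => timeReverse w h x t) s ↔
      LipschitzOnWith K (fun x => w x (h - t)) s :=
  lipschitzOnWith_neg_iff

protected lemma IsRegularPoint.timeReverse {w : ℝ → ℝ → ℝ} {h x t : ℝ}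
    (hp : IsRegularPoint w h (x, h - t)) :
    IsRegularPoint (timeReverse w h) h (x, t) := by
  obtain ⟨r, hr, K, hK⟩ := hp
  have hrefl := tendsto_const_sub_nhdsWithin_Icc 0 h h t
  rw [sub_self, sub_zero] at hrefl
  exact ⟨r, hr, K, (hrefl.eventually hK).mono fun _ => lipschitzOnWith_timeReverse_iff.2⟩

/-- The energy `e^{-μ (t - t₀)} (w(x, t) - w(x₀, t₀))²` penalized by the squared distance to the
characteristic through `(x₀, t₀)`. A rate `μ > 2 ∂ₓw` rules out positive interior maxima, and on
the characteristic itself the penalty vanishes. -/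
def penalizedEnergy (w : ℝ → ℝ → ℝ) (x₀ t₀ μ A x t : ℝ) : ℝ :=
  Real.exp (-μ * (t - t₀)) * (w x t - w x₀ t₀) ^ 2 - A * (x - x₀ + w x₀ t₀ * (t - t₀)) ^ 2

lemma penalizedEnergy_nonpos_of_sq_le {w : ℝ → ℝ → ℝ} {x₀ t₀ μ A x t : ℝ} (hμ : 0 ≤ μ)
    (ht : t₀ ≤ t) (hle : (w x t - w x₀ t₀) ^ 2 ≤ A * (x - x₀ + w x₀ t₀ * (t - t₀)) ^ 2) :
    penalizedEnergy w x₀ t₀ μ A x t ≤ 0 := by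
  have hexp : Real.exp (-μ * (t - t₀)) ≤ 1 :=
    Real.exp_le_one_iff.2 (by linarith [mul_nonneg hμ (sub_nonneg.2 ht)])
  exact sub_nonpos.2 ((mul_le_of_le_one_left (sq_nonneg _) hexp).trans hle)

/-- On the lateral sides the distance to the characteristic is at least `ρ / 2`, so a large
penalty absorbs the energy there. -/
lemma exists_penalizedEnergy_nonpos_boundary {w : ℝ → ℝ → ℝ} {x₀ t₀ t₁ ρ μ M : ℝ} {K : ℝ≥0}
    (hμ : 0 ≤ μ) (hρ : 0 < ρ) (hlip : LipschitzOnWith K (fun x => w x t₀) (closedBall x₀ ρ))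
    (hM : ∀ x ∈ closedBall x₀ ρ, ∀ t ∈ Icc t₀ t₁, |w x t - w x₀ t₀| ≤ M)
    (hspeed : |w x₀ t₀| * (t₁ - t₀) ≤ ρ / 2) :
    ∃ A ≥ 0, ∀ x ∈ closedBall x₀ ρ, ∀ t ∈ Icc t₀ t₁, t = t₀ ∨ dist x x₀ = ρ →
      penalizedEnergy w x₀ t₀ μ A x t ≤ 0 := by
  refine ⟨K ^ 2 + M ^ 2 / (ρ / 2) ^ 2, by positivity, fun x hx t ht hbdry =>
    penalizedEnergy_nonpos_of_sq_le hμ ht.1 ?_⟩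
  rw [add_mul]
  rcases hbdry with rfl | hside
  · refine le_add_of_le_of_nonneg ?_ (by positivity)
    have hinit := hlip.dist_le_mul x hx x₀ (mem_closedBall_self hρ.le)
    rw [sub_self, mul_zero, add_zero, ← mul_pow, sq_le_sq, abs_mul, abs_of_nonneg K.coe_nonneg]
    exact hinit
  · refine le_add_of_nonneg_of_le (by positivity) ?_
    have hdrift : |w x₀ t₀ * (t - t₀)| ≤ ρ / 2 := by
      rw [abs_mul, abs_of_nonneg (sub_nonneg.2 ht.1)]
      exact (by gcongr; exact ht.2 : |w x₀ t₀| * (t - t₀) ≤ _).trans hspeed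
    have hfar : ρ / 2 ≤ |x - x₀ + w x₀ t₀ * (t - t₀)| := by
      rw [Real.dist_eq] at hside
      have htri := abs_sub_abs_le_abs_add (x - x₀) (w x₀ t₀ * (t - t₀))
      linarith
    calc (w x t - w x₀ t₀) ^ 2 ≤ M ^ 2 := sq_le_sq.2 ((hM x hx t ht).trans (le_abs_self M))
      _ = M ^ 2 / (ρ / 2) ^ 2 * (ρ / 2) ^ 2 := by field_simp
      _ ≤ M ^ 2 / (ρ / 2) ^ 2 * |x - x₀ + w x₀ t₀ * (t - t₀)| ^ 2 := by gcongr
      _ = M ^ 2 / (ρ / 2) ^ 2 * (x - x₀ + w x₀ t₀ * (t - t₀)) ^ 2 := by rw [sq_abs]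

namespace IsBurgersSolution

variable {w : ℝ → ℝ → ℝ} {h : ℝ}

protected lemma timeReverse (hw : IsBurgersSolution w h) :
    IsBurgersSolution (timeReverse w h) h where
  contDiff t ht := (hw.contDiff (h - t) ⟨sub_nonneg.2 ht.2, sub_le_self h ht.1⟩).neg
  hasDerivWithinAt x t ht := by
    have hmaps : MapsTo (fun s => h - s) (Icc 0 h) (Icc 0 h) := fun s hs =>
      ⟨sub_nonneg.2 hs.2, sub_le_self h hs.1⟩
    have hd := ((hw.hasDerivWithinAt x (h - t) (hmaps ht)).comp t
      ((hasDerivWithinAt_id t _).const_sub h) hmaps).neg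
    refine hd.congr_deriv ?_
    simp only [timeReverse, deriv.fun_neg]
    ring

lemma continuousOn_time (hw : IsBurgersSolution w h) (x : ℝ) :
    ContinuousOn (fun s => w x s) (Icc 0 h) := fun t ht =>
  (hw.hasDerivWithinAt x t ht).continuousWithinAt

lemma continuousWithinAt_of_isRegularPoint (hw : IsBurgersSolution w h) {x t : ℝ}
    (ht : t ∈ Icc 0 h) (hp : IsRegularPoint w h (x, t)) :
    ContinuousWithinAt (fun p : ℝ × ℝ => w p.1 p.2) (univ ×ˢ Icc 0 h) (x, t) := by
  obtain ⟨r, hr, K, hK⟩ := hp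
  set S := {s | s ∈ Icc 0 h ∧ LipschitzOnWith K (fun y => w y s) (ball x r)}
  have hS : S ∈ 𝓝[Icc 0 h] t := eventually_mem_nhdsWithin.and hK
  have hcont : ContinuousOn (fun p : ℝ × ℝ => w p.1 p.2) (ball x r ×ˢ S) :=
    continuousOn_prod_of_continuousOn_lipschitzOnWith _ K
      (fun y _ => (hw.continuousOn_time y).mono fun _ hs => hs.1) fun _ hs => hs.2
  refine (hcont (x, t) ⟨mem_ball_self hr, mem_of_mem_nhdsWithin ht hS⟩).mono_of_mem_nhdsWithin ?_
  rw [nhdsWithin_prod_eq, nhdsWithin_univ]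
  exact prod_mem_prod (ball_mem_nhds x hr) hS

lemma hasDerivAt_penalizedEnergy_space (hw : IsBurgersSolution w h) (x₀ t₀ μ A x : ℝ) {t : ℝ}
    (ht : t ∈ Icc 0 h) :
    HasDerivAt (fun y => penalizedEnergy w x₀ t₀ μ A y t)
      (Real.exp (-μ * (t - t₀)) * (2 * (w x t - w x₀ t₀) * deriv (fun y => w y t) x)
        - A * (2 * (x - x₀ + w x₀ t₀ * (t - t₀)))) x := by
  have hwx := ((hw.contDiff t ht).differentiable one_ne_zero x).hasDerivAt
  have hline : HasDerivAt (fun y => y - x₀ + w x₀ t₀ * (t - t₀)) 1 x :=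
    ((hasDerivAt_id x).sub_const x₀).add_const _
  refine ((((hwx.sub_const (w x₀ t₀)).pow 2).const_mul _).sub
    ((hline.pow 2).const_mul A)).congr_deriv ?_
  simp

lemma hasDerivWithinAt_penalizedEnergy_time (hw : IsBurgersSolution w h) (x₀ t₀ μ A x : ℝ) {t : ℝ}
    (ht : t ∈ Icc 0 h) :
    HasDerivWithinAt (fun s => penalizedEnergy w x₀ t₀ μ A x s)
      (Real.exp (-μ * (t - t₀)) * (2 * (w x t - w x₀ t₀) * (w x t * deriv (fun y => w y t) x)
          - μ * (w x t - w x₀ t₀) ^ 2)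
        - A * (2 * (x - x₀ + w x₀ t₀ * (t - t₀)) * w x₀ t₀)) (Icc 0 h) t := by
  have hshift : HasDerivAt (fun s => s - t₀) 1 t := (hasDerivAt_id t).sub_const t₀
  have hexp := (hshift.const_mul (-μ)).exp.hasDerivWithinAt (s := Icc 0 h)
  have hline := ((hshift.const_mul (w x₀ t₀)).const_add (x - x₀)).hasDerivWithinAt (s := Icc 0 h)
  have hwt := (hw.hasDerivWithinAt x t ht).sub_const (w x₀ t₀)
  refine ((hexp.mul (hwt.pow 2)).sub ((hline.pow 2).const_mul A)).congr_deriv ?_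
  simp
  ring

/-- At an interior maximum the two derivatives combine to
`e^{-μ (t - t₀)} (w(x, t) - w(x₀, t₀))² (2 ∂ₓw - μ) ≥ 0`. -/
lemma eq_of_isMaxOn_penalizedEnergy (hw : IsBurgersSolution w h) {x₀ t₀ t₁ μ A x t : ℝ}
    (hsub : Icc t₀ t₁ ⊆ Icc 0 h) (ht : t ∈ Ioc t₀ t₁)
    (hspace : IsLocalMax (fun y => penalizedEnergy w x₀ t₀ μ A y t) x)
    (htime : IsMaxOn (fun s => penalizedEnergy w x₀ t₀ μ A x s) (Icc t₀ t₁) t)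
    (hμ : 2 * deriv (fun y => w y t) x < μ) : w x t = w x₀ t₀ := by
  have hth := hsub (Ioc_subset_Icc_self ht)
  have hzero := hspace.hasDerivAt_eq_zero (hw.hasDerivAt_penalizedEnergy_space x₀ t₀ μ A x hth)
  have hnonneg := nonneg_of_isMaxOn_Icc ht htime
    ((hw.hasDerivWithinAt_penalizedEnergy_time x₀ t₀ μ A x hth).mono hsub)
  have hcombine : 0 ≤ Real.exp (-μ * (t - t₀)) * (2 * deriv (fun y => w y t) x - μ) *
      (w x t - w x₀ t₀) ^ 2 := by
    linear_combination hnonneg + w x₀ t₀ * hzero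
  have hneg := mul_neg_of_pos_of_neg (Real.exp_pos (-μ * (t - t₀))) (sub_neg.2 hμ)
  have hsq := nonpos_of_mul_nonneg_right hcombine hneg
  exact sub_eq_zero.1 (pow_eq_zero_iff two_ne_zero |>.1 (hsq.antisymm (sq_nonneg _)))

lemma exists_penalizedEnergy_nonpos (hw : IsBurgersSolution w h) {x₀ t₀ t₁ ρ : ℝ} {K : ℝ≥0}
    (hρ : 0 < ρ) (ht₀₁ : t₀ ≤ t₁) (hsub : Icc t₀ t₁ ⊆ Icc 0 h)
    (hlip : ∀ s ∈ Icc t₀ t₁, LipschitzOnWith K (fun x => w x s) (closedBall x₀ ρ))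
    (hspeed : |w x₀ t₀| * (t₁ - t₀) ≤ ρ / 2) :
    ∃ μ A, ∀ x ∈ closedBall x₀ ρ, ∀ t ∈ Icc t₀ t₁, penalizedEnergy w x₀ t₀ μ A x t ≤ 0 := by
  have hcont : ContinuousOn (fun p : ℝ × ℝ => w p.1 p.2) (closedBall x₀ ρ ×ˢ Icc t₀ t₁) :=
    continuousOn_prod_of_continuousOn_lipschitzOnWith _ K
      (fun y _ => (hw.continuousOn_time y).mono hsub) hlip
  have hbox : IsCompact (closedBall x₀ ρ ×ˢ Icc t₀ t₁) :=
    (isCompact_closedBall x₀ ρ).prod isCompact_Icc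
  obtain ⟨M, hM⟩ := hbox.exists_bound_of_continuousOn
    (hcont.sub (continuousOn_const (c := w x₀ t₀)))
  obtain ⟨A, hA₀, hA⟩ := exists_penalizedEnergy_nonpos_boundary (μ := 2 * K + 1) (by positivity) hρ
    (hlip t₀ (left_mem_Icc.2 ht₀₁)) (fun x hx t ht => hM (x, t) ⟨hx, ht⟩) hspeed
  have hEcont : ContinuousOn (fun p : ℝ × ℝ => penalizedEnergy w x₀ t₀ (2 * K + 1) A p.1 p.2)
      (closedBall x₀ ρ ×ˢ Icc t₀ t₁) := by
    unfold penalizedEnergy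
    fun_prop
  obtain ⟨⟨x, t⟩, ⟨hx, ht⟩, hmax⟩ :=
    hbox.exists_isMaxOn ⟨(x₀, t₀), mem_closedBall_self hρ.le, left_mem_Icc.2 ht₀₁⟩ hEcont
  have hle : ∀ y ∈ closedBall x₀ ρ, ∀ s ∈ Icc t₀ t₁,
      penalizedEnergy w x₀ t₀ (2 * K + 1) A y s ≤ penalizedEnergy w x₀ t₀ (2 * K + 1) A x t :=
    fun y hy s hs => isMaxOn_iff.1 hmax (y, s) ⟨hy, hs⟩
  refine ⟨2 * K + 1, A, fun y hy s hs => (hle y hy s hs).trans ?_⟩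
  by_cases hbdry : t = t₀ ∨ dist x x₀ = ρ
  · exact hA x hx t ht hbdry
  obtain ⟨htne, hxne⟩ := not_or.1 hbdry
  have hxnhds : closedBall x₀ ρ ∈ 𝓝 x := closedBall_mem_nhds_of_mem (lt_of_le_of_ne hx hxne)
  have hderiv : |deriv (fun y => w y t) x| ≤ K := norm_deriv_le_of_lipschitzOn hxnhds (hlip t ht)
  have hwx : w x t = w x₀ t₀ := hw.eq_of_isMaxOn_penalizedEnergy hsub
    ⟨lt_of_le_of_ne ht.1 (Ne.symm htne), ht.2⟩
    (mem_of_superset hxnhds fun y hy => hle y hy t ht) (fun s hs => hle x hx s hs)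
    (by linarith [le_of_abs_le hderiv])
  refine penalizedEnergy_nonpos_of_sq_le (by positivity) ht.1 ?_
  rw [hwx, sub_self, zero_pow two_ne_zero]
  positivity

lemma eq_along_characteristic_of_lipschitzOnWith (hw : IsBurgersSolution w h) {x₀ t₀ t₁ ρ : ℝ}
    {K : ℝ≥0} (hρ : 0 < ρ) (ht₀₁ : t₀ ≤ t₁) (hsub : Icc t₀ t₁ ⊆ Icc 0 h)
    (hlip : ∀ s ∈ Icc t₀ t₁, LipschitzOnWith K (fun x => w x s) (closedBall x₀ ρ))
    (hspeed : |w x₀ t₀| * (t₁ - t₀) ≤ ρ / 2) :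
    w (x₀ - w x₀ t₀ * (t₁ - t₀)) t₁ = w x₀ t₀ := by
  obtain ⟨μ, A, hE⟩ := hw.exists_penalizedEnergy_nonpos hρ ht₀₁ hsub hlip hspeed
  have hmem : x₀ - w x₀ t₀ * (t₁ - t₀) ∈ closedBall x₀ ρ := by
    rw [mem_closedBall, dist_self_sub_left, Real.norm_eq_abs, abs_mul,
      abs_of_nonneg (sub_nonneg.2 ht₀₁)]
    linarith
  have hle := hE _ hmem t₁ (right_mem_Icc.2 ht₀₁)
  have hsq : (w (x₀ - w x₀ t₀ * (t₁ - t₀)) t₁ - w x₀ t₀) ^ 2 ≤ 0 := by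
    refine nonpos_of_mul_nonpos_right (a := Real.exp (-μ * (t₁ - t₀))) ?_ (Real.exp_pos _)
    simpa [penalizedEnergy] using hle
  exact sub_eq_zero.1 (pow_eq_zero_iff two_ne_zero |>.1 (hsq.antisymm (sq_nonneg _)))

lemma eventually_eq_along_characteristic (hw : IsBurgersSolution w h) {x₀ t₀ : ℝ}
    (ht₀ : t₀ ∈ Ico 0 h) (hreg : IsRegularPoint w h (x₀, t₀)) :
    ∀ᶠ t in 𝓝[>] t₀, w (x₀ - w x₀ t₀ * (t - t₀)) t = w x₀ t₀ := by
  obtain ⟨r, hr, K, hK⟩ := hreg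
  have hK' : ∀ᶠ t in 𝓝[≥] t₀, LipschitzOnWith K (fun x => w x t) (ball x₀ r) :=
    hK.filter_mono <| le_inf inf_le_left (le_principal_iff.2 (Icc_mem_nhdsGE_of_mem ht₀))
  have hsmall : ∀ᶠ t in 𝓝[≥] t₀, |w x₀ t₀| * (t - t₀) < r / 2 / 2 :=
    eventually_nhdsWithin_of_eventually_nhds <|
      ContinuousAt.eventually_lt (by fun_prop) continuousAt_const (by simpa using hr)
  obtain ⟨u, hu, hall⟩ := mem_nhdsGE_iff_exists_Ico_subset.1
    ((hK'.and hsmall).and (Icc_mem_nhdsGE_of_mem ht₀))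
  filter_upwards [Ioo_mem_nhdsGT hu] with t ht
  have hsub : ∀ s ∈ Icc t₀ t, s ∈ Ico t₀ u := fun s hs => ⟨hs.1, hs.2.trans_lt ht.2⟩
  exact hw.eq_along_characteristic_of_lipschitzOnWith (half_pos hr) ht.1.le
    (fun s hs => (hall (hsub s hs)).2)
    (fun s hs => (hall (hsub s hs)).1.1.mono (closedBall_subset_ball (half_lt_self hr)))
    (hall (hsub t (right_mem_Icc.2 ht.1.le))).1.2.le

lemma eq_along_characteristic_of_isRegularPoint (hw : IsBurgersSolution w h) {x s t : ℝ}
    (hs : 0 ≤ s) (hst : s ≤ t) (ht : t ≤ h)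
    (hreg : ∀ q ∈ Icc s t, IsRegularPoint w h (x - w x s * (q - s), q)) :
    w (x - w x s * (t - s)) t = w x s := by
  have hIcc : Icc s t ⊆ Icc 0 h := Icc_subset_Icc hs ht
  have hcont : ContinuousOn (fun q => w (x - w x s * (q - s)) q) (Icc s t) := fun q hq =>
    (hw.continuousWithinAt_of_isRegularPoint (hIcc hq) (hreg q hq)).comp
      (f := fun q => (x - w x s * (q - s), q)) (by fun_prop) fun _ hq' => ⟨mem_univ _, hIcc hq'⟩
  have hclosed : IsClosed ({q | w (x - w x s * (q - s)) q = w x s} ∩ Icc s t) := by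
    rw [inter_comm]
    exact hcont.preimage_isClosed_of_isClosed isClosed_Icc isClosed_singleton
  refine hclosed.Icc_subset_of_forall_mem_nhdsWithin (by simp) (fun q hq => ?_)
    (right_mem_Icc.2 hst)
  have hq' : q ∈ Icc s t := Ico_subset_Icc_self hq.2
  filter_upwards [hw.eventually_eq_along_characteristic ⟨hs.trans hq.2.1, hq.2.2.trans_le ht⟩
    (hreg q hq')] with p hp
  have hval : w (x - w x s * (q - s)) q = w x s := hq.1
  rw [hval] at hp
  convert! hp using 2
  ring

/-- Apply the constancy along characteristics on `[t, d]` and let `t` decrease to `e`. -/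
lemma eq_of_forall_Ioc_isRegularPoint (hw : IsBurgersSolution w h) {x₀ r e d y : ℝ}
    (he : 0 ≤ e) (hed : e ≤ d) (hd : d ≤ h)
    (hreg : ∀ t ∈ Ioc e d, ∀ x ∈ ball x₀ r, IsRegularPoint w h (x, t))
    (hy : |y - x₀| + |w y e| * (d - e) < r) :
    w (y - w y e * (d - e)) d = w y e := by
  rcases hed.eq_or_lt with rfl | hed
  · simp
  have hIoc : Ioc e d ⊆ Icc 0 h := Ioc_subset_Icc_self.trans (Icc_subset_Icc he hd)
  have hwe : Tendsto (fun t => w y t) (𝓝[Ioc e d] e) (𝓝 (w y e)) :=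
    (hw.continuousOn_time y e ⟨he, hed.le.trans hd⟩).mono hIoc
  have htime : Tendsto (fun t => d - t) (𝓝[Ioc e d] e) (𝓝 (d - e)) :=
    (tendsto_const_nhds.sub tendsto_id).mono_left nhdsWithin_le_nhds
  have hstay : ∀ᶠ t in 𝓝[Ioc e d] e, |y - x₀| + |w y t| * (d - t) < r :=
    ((hwe.abs.mul htime).const_add _).eventually_lt_const hy
  have hconst : ∀ᶠ t in 𝓝[Ioc e d] e, w (y - w y t * (d - t)) d = w y t := by
    filter_upwards [hstay, self_mem_nhdsWithin] with t hstay_t ht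
    refine hw.eq_along_characteristic_of_isRegularPoint (he.trans ht.1.le) ht.2 hd fun q hq =>
      hreg q ⟨ht.1.trans_le hq.1, hq.2⟩ _ ?_
    rw [mem_ball, Real.dist_eq]
    calc |y - w y t * (q - t) - x₀| = |y - x₀ - w y t * (q - t)| := by ring_nf
      _ ≤ |y - x₀| + |w y t| * |q - t| := (abs_sub _ _).trans_eq (by rw [abs_mul])
      _ ≤ |y - x₀| + |w y t| * (d - t) := by
        rw [abs_of_nonneg (sub_nonneg.2 hq.1)]
        gcongr
        exact hq.2
      _ < r := hstay_t
  have hfoot : Tendsto (fun t => w (y - w y t * (d - t)) d) (𝓝[Ioc e d] e)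
      (𝓝 (w (y - w y e * (d - e)) d)) :=
    ((hw.contDiff d ⟨he.trans hed.le, hd⟩).continuous.tendsto _).comp
      (tendsto_const_nhds.sub (hwe.mul htime))
  have : (𝓝[Ioc e d] e).NeBot := left_nhdsWithin_Ioc_neBot hed
  exact tendsto_nhds_unique_of_eventuallyEq hfoot hwe hconst

lemma isClosed_setOf_lipschitzOnWith_ball (hw : IsBurgersSolution w h) (K : ℝ≥0) (r : ℝ) :
    IsClosed {p : ℝ × ℝ | p.2 ∈ Icc 0 h ∧ LipschitzOnWith K (fun x => w x p.2) (ball p.1 r)} := by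
  refine IsSeqClosed.isClosed fun p q hp hpq => ?_
  have hspace : Tendsto (fun n => (p n).1) atTop (𝓝 q.1) := (continuous_fst.tendsto q).comp hpq
  have htime : Tendsto (fun n => (p n).2) atTop (𝓝 q.2) := (continuous_snd.tendsto q).comp hpq
  have hq : q.2 ∈ Icc 0 h := isClosed_Icc.mem_of_tendsto htime (.of_forall fun n => (hp n).1)
  refine ⟨hq, LipschitzOnWith.of_dist_le_mul fun x hx y hy => ?_⟩
  have hvalue : ∀ z, Tendsto (fun n => w z (p n).2) atTop (𝓝 (w z q.2)) := fun z =>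
    (hw.continuousOn_time z q.2 hq).tendsto.comp <|
      tendsto_nhdsWithin_iff.2 ⟨htime, .of_forall fun n => (hp n).1⟩
  have hball : ∀ z ∈ ball q.1 r, ∀ᶠ n in atTop, z ∈ ball (p n).1 r := fun z hz =>
    (tendsto_const_nhds.dist hspace).eventually_lt_const hz
  refine le_of_tendsto ((hvalue x).dist (hvalue y)) ?_
  filter_upwards [hball x hx, hball y hy] with n hxn hyn
  exact (hp n).2.dist_le_mul x hxn y hyn

lemma lipschitzOnWith_of_forall_Ioc_isRegularPoint (hw : IsBurgersSolution w h) {x₀ e t r : ℝ}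
    {K : ℝ≥0} (hr : 0 < r) (he : 0 ≤ e) (het : e ≤ t) (hth : t ≤ h)
    (hlip : LipschitzOnWith K (fun x => w x e) (ball x₀ r))
    (hreg : ∀ s ∈ Ioc e t, ∀ x ∈ ball x₀ r, IsRegularPoint w h (x, s))
    (hKt : K * (t - e) ≤ 1 / 2) (hspeed : (|w x₀ e| + K * r) * (t - e) ≤ r / 4) :
    LipschitzOnWith (2 * K) (fun x => w x t) (ball x₀ (r / 4)) := by
  have hsub : closedBall x₀ (r / 2) ⊆ ball x₀ r := closedBall_subset_ball (half_lt_self hr)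
  have hte : 0 ≤ t - e := sub_nonneg.2 het
  have hdrift : ∀ y ∈ closedBall x₀ (r / 2), |w y e| * (t - e) ≤ r / 4 := fun y hy => by
    refine le_trans (mul_le_mul_of_nonneg_right ?_ hte) hspeed
    calc |w y e| ≤ |w x₀ e| + |w y e - w x₀ e| := by
          linarith [abs_sub_abs_le_abs_sub (w y e) (w x₀ e)]
      _ ≤ |w x₀ e| + K * dist y x₀ := by
          gcongr
          exact hlip.dist_le_mul y (hsub hy) x₀ (mem_ball_self hr)
      _ ≤ |w x₀ e| + K * r := by
          gcongr
          exact (hsub hy).le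
  have hshift : LipschitzOnWith (2 * K) (fun x => w x t) (closedBall x₀ (r / 2 / 2)) := by
    refine lipschitzOnWith_of_shift_eq (σ := t - e) (hlip.mono hsub) ?_ (fun y hy => ?_)
      fun y hy => ?_
    · rwa [abs_of_nonneg hte, mul_comm]
    · rw [abs_mul, abs_of_nonneg hte, mul_comm]
      linarith [hdrift y hy]
    · rw [mul_comm]
      refine hw.eq_of_forall_Ioc_isRegularPoint he het hth hreg ?_
      linarith [hdrift y hy, mem_closedBall.1 hy, Real.dist_eq y x₀]
  exact hshift.mono (ball_subset_closedBall.trans_eq (by ring_nf))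

/-- Transport the last slice in `[t₀, t]` that is `K`-Lipschitz: after it every point is regular. -/
lemma lipschitzOnWith_of_forall_lipschitzOnWith_or_isRegularPoint (hw : IsBurgersSolution w h)
    {x₀ t₀ t r B : ℝ} {K : ℝ≥0} (hr : 0 < r) (ht₀ : 0 ≤ t₀) (ht₀t : t₀ ≤ t) (hth : t ≤ h)
    (hinit : LipschitzOnWith K (fun x => w x t₀) (ball x₀ r))
    (hor : ∀ s ∈ Icc t₀ t, LipschitzOnWith K (fun x => w x s) (ball x₀ r) ∨
      ∀ x ∈ ball x₀ r, IsRegularPoint w h (x, s))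
    (hB : ∀ s ∈ Icc t₀ t, |w x₀ s| ≤ B) (hKt : K * (t - t₀) ≤ 1 / 2)
    (hBt : (B + K * r) * (t - t₀) ≤ r / 4) :
    LipschitzOnWith (2 * K) (fun x => w x t) (ball x₀ (r / 4)) := by
  have hIcc : Icc t₀ t ⊆ Icc 0 h := Icc_subset_Icc ht₀ hth
  have hclosed : IsClosed {s | s ∈ Icc 0 h ∧ LipschitzOnWith K (fun x => w x s) (ball x₀ r)} :=
    (hw.isClosed_setOf_lipschitzOnWith_ball K r).preimage (Continuous.prodMk_right x₀)
  obtain ⟨e, ⟨⟨he, -, hlip⟩, hlast⟩⟩ := (isCompact_Icc.inter_right hclosed).exists_isGreatest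
    ⟨t₀, left_mem_Icc.2 ht₀t, hIcc (left_mem_Icc.2 ht₀t), hinit⟩
  have hreg : ∀ s ∈ Ioc e t, ∀ x ∈ ball x₀ r, IsRegularPoint w h (x, s) := fun s hs =>
    have hs' : s ∈ Icc t₀ t := ⟨he.1.trans hs.1.le, hs.2⟩
    (hor s hs').resolve_left fun hs_lip => hs.1.not_ge (hlast ⟨hs', hIcc hs', hs_lip⟩)
  have hte : t - e ≤ t - t₀ := sub_le_sub_left he.1 t
  have hspeed : |w x₀ e| + K * r ≤ B + K * r := add_le_add_left (hB e he) _
  refine hw.lipschitzOnWith_of_forall_Ioc_isRegularPoint hr (ht₀.trans he.1) he.2 hth hlip hreg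
    ?_ ?_
  · exact (mul_le_mul_of_nonneg_left hte K.coe_nonneg).trans hKt
  · exact (mul_le_mul hspeed hte (sub_nonneg.2 he.2) (hspeed.trans' (by positivity))).trans hBt

lemma eventually_lipschitzOnWith_right (hw : IsBurgersSolution w h) {x₀ t₀ r : ℝ} {K : ℝ≥0}
    (hr : 0 < r) (ht₀ : t₀ ∈ Icc 0 h)
    (hinit : LipschitzOnWith K (fun x => w x t₀) (ball x₀ r))
    (hor : ∀ s ∈ Icc 0 h, |s - t₀| < r → LipschitzOnWith K (fun x => w x s) (ball x₀ r) ∨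
      ∀ x ∈ ball x₀ r, IsRegularPoint w h (x, s)) :
    ∀ᶠ t in 𝓝[Icc t₀ h] t₀, LipschitzOnWith (2 * K) (fun x => w x t) (ball x₀ (r / 4)) := by
  obtain ⟨B, hB⟩ := isCompact_Icc.exists_bound_of_continuousOn (hw.continuousOn_time x₀)
  have hKt : ∀ᶠ t in 𝓝 t₀, K * (t - t₀) < 1 / 2 :=
    ContinuousAt.eventually_lt (by fun_prop) continuousAt_const (by simp)
  have hBt : ∀ᶠ t in 𝓝 t₀, (B + K * r) * (t - t₀) < r / 4 :=
    ContinuousAt.eventually_lt (by fun_prop) continuousAt_const (by simpa using hr)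
  filter_upwards [self_mem_nhdsWithin, nhdsWithin_le_nhds hKt, nhdsWithin_le_nhds hBt,
    nhdsWithin_le_nhds (ball_mem_nhds t₀ hr)] with t ht hKt hBt htr
  have hIcc : ∀ s ∈ Icc t₀ t, s ∈ Icc 0 h := fun s hs =>
    ⟨ht₀.1.trans hs.1, hs.2.trans ht.2⟩
  refine hw.lipschitzOnWith_of_forall_lipschitzOnWith_or_isRegularPoint hr ht₀.1 ht.1 ht.2 hinit
    (fun s hs => hor s (hIcc s hs) ?_) (fun s hs => hB s (hIcc s hs)) hKt.le hBt.le
  rw [abs_of_nonneg (sub_nonneg.2 hs.1)]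
  linarith [hs.2, (abs_lt.1 (mem_ball.1 htr)).2]

lemma isRegularPoint_of_forall_lipschitzOnWith_or_isRegularPoint (hw : IsBurgersSolution w h)
    {x₀ t₀ r : ℝ} {K : ℝ≥0} (hr : 0 < r) (ht₀ : t₀ ∈ Icc 0 h)
    (hinit : LipschitzOnWith K (fun x => w x t₀) (ball x₀ r))
    (hor : ∀ s ∈ Icc 0 h, |s - t₀| < r → LipschitzOnWith K (fun x => w x s) (ball x₀ r) ∨
      ∀ x ∈ ball x₀ r, IsRegularPoint w h (x, s)) :
    IsRegularPoint w h (x₀, t₀) := by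
  have hright := hw.eventually_lipschitzOnWith_right hr ht₀ hinit hor
  have hmem : ∀ {s}, s ∈ Icc 0 h → h - s ∈ Icc 0 h := fun hs =>
    ⟨sub_nonneg.2 hs.2, sub_le_self h hs.1⟩
  have hreversed : ∀ᶠ t in 𝓝[Icc (h - t₀) h] (h - t₀),
      LipschitzOnWith (2 * K) (fun x => timeReverse w h x t) (ball x₀ (r / 4)) := by
    refine hw.timeReverse.eventually_lipschitzOnWith_right hr (hmem ht₀)
      (by rwa [lipschitzOnWith_timeReverse_iff, sub_sub_cancel]) fun s hs hsr => ?_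
    refine (hor (h - s) (hmem hs) ?_)
      |>.imp lipschitzOnWith_timeReverse_iff.2 fun hreg x hx =>
      (hreg x hx).timeReverse
    rwa [← abs_neg, show -(h - s - t₀) = s - (h - t₀) by ring]
  have hleft : ∀ᶠ t in 𝓝[Icc 0 t₀] t₀,
      LipschitzOnWith (2 * K) (fun x => w x t) (ball x₀ (r / 4)) := by
    have hrefl := tendsto_const_sub_nhdsWithin_Icc 0 t₀ h t₀
    rw [sub_zero] at hrefl
    filter_upwards [hrefl.eventually hreversed] with t ht
    rwa [lipschitzOnWith_timeReverse_iff, sub_sub_cancel] at ht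
  refine ⟨r / 4, by positivity, 2 * K, ?_⟩
  rw [← Icc_union_Icc_eq_Icc ht₀.1 ht₀.2, nhdsWithin_union]
  exact eventually_sup.2 ⟨hleft, hright⟩

lemma exists_nat_lipschitzOnWith (hw : IsBurgersSolution w h) (x r : ℝ) {t : ℝ}
    (ht : t ∈ Icc 0 h) : ∃ k : ℕ, LipschitzOnWith k (fun x => w x t) (ball x r) := by
  obtain ⟨K, hK⟩ := (hw.contDiff t ht).locallyLipschitz.locallyLipschitzOn
    |>.exists_lipschitzOnWith_of_compact (isCompact_closedBall x r)
  obtain ⟨k, hk⟩ := exists_nat_ge K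
  exact ⟨k, (hK.mono ball_subset_closedBall).weaken hk⟩

/-- The irregular points form a closed set, covered by the closed sets of points `p` whose slice
is `k`-Lipschitz on `ball p.1 1`, `k : ℕ`. By Baire one of these has interior in it. -/
lemma exists_ball_forall_lipschitzOnWith_of_not_isRegularPoint (hw : IsBurgersSolution w h)
    {p : ℝ × ℝ} (hp : ¬IsRegularPoint w h p) :
    ∃ q₀, ¬IsRegularPoint w h q₀ ∧ ∃ ε > 0, ∃ K : ℝ≥0, ∀ q ∈ ball q₀ ε, ¬IsRegularPoint w h q →
      LipschitzOnWith K (fun x => w x q.2) (ball q.1 1) := by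
  set irregular : Set (ℝ × ℝ) := {q | ¬IsRegularPoint w h q}
  have hclosed : IsClosed irregular := (isOpen_setOf_isRegularPoint w h).isClosed_compl
  have := hclosed.completeSpace_coe
  have : Nonempty irregular := ⟨p, hp⟩
  set F : ℕ → Set irregular := fun k =>
    {q | q.1.2 ∈ Icc 0 h ∧ LipschitzOnWith k (fun x => w x q.1.2) (ball q.1.1 1)}
  have hF : ∀ k, IsClosed (F k) := fun k =>
    (hw.isClosed_setOf_lipschitzOnWith_ball k 1).preimage continuous_subtype_val
  have hcover : ⋃ k, F k = univ := eq_univ_of_forall fun q => by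
    have hq : q.1.2 ∈ Icc 0 h := not_imp_comm.1 isRegularPoint_of_notMem_Icc q.2
    obtain ⟨k, hk⟩ := hw.exists_nat_lipschitzOnWith q.1.1 1 hq
    exact mem_iUnion.2 ⟨k, hq, hk⟩
  obtain ⟨k, q₀, hq₀⟩ := nonempty_interior_of_iUnion_of_closed hF hcover
  obtain ⟨ε, hε, hball⟩ := Metric.mem_nhds_iff.1 (mem_interior_iff_mem_nhds.1 hq₀)
  exact ⟨q₀, q₀.2, ε, hε, k, fun q hq hq_irregular =>
    (hball (show (⟨q, hq_irregular⟩ : irregular) ∈ ball q₀ ε from hq)).2⟩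

theorem isRegularPoint (hw : IsBurgersSolution w h) (p : ℝ × ℝ) : IsRegularPoint w h p := by
  by_contra hp
  obtain ⟨⟨x₀, t₀⟩, hq₀, ε, hε, K, hlip⟩ :=
    hw.exists_ball_forall_lipschitzOnWith_of_not_isRegularPoint hp
  set r := min ε (1 / 2)
  have hr : 0 < r := by positivity
  have hlip' : ∀ q ∈ ball (x₀, t₀) r, ¬IsRegularPoint w h q →
      LipschitzOnWith K (fun x => w x q.2) (ball x₀ r) := fun q hq hq_irregular => by
    refine (hlip q (ball_subset_ball (min_le_left _ _) hq) hq_irregular).mono (ball_subset_ball' ?_)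
    have hdist : dist q.1 x₀ < r := (le_max_left _ _).trans_lt hq
    linarith [min_le_right ε (1 / 2), dist_comm q.1 x₀]
  refine hq₀ (hw.isRegularPoint_of_forall_lipschitzOnWith_or_isRegularPoint hr
    (not_imp_comm.1 isRegularPoint_of_notMem_Icc hq₀) (hlip' _ (mem_ball_self hr) hq₀)
    fun s _ hs => or_iff_not_imp_right.2 fun hreg => ?_)
  push Not at hreg
  obtain ⟨x, hx, hxs⟩ := hreg
  exact hlip' (x, s) (max_lt hx hs) hxs

theorem eq_along_characteristic (hw : IsBurgersSolution w h) (x : ℝ) {s t : ℝ} (hs : s ∈ Icc 0 h)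
    (ht : t ∈ Icc 0 h) : w (x - w x s * (t - s)) t = w x s := by
  rcases le_total s t with hst | hts
  · exact hw.eq_along_characteristic_of_isRegularPoint hs.1 hst ht.2 fun q _ => hw.isRegularPoint _
  · have hreversed := hw.timeReverse.eq_along_characteristic_of_isRegularPoint (x := x)
      (sub_nonneg.2 hs.2) (sub_le_sub_left hts h) (sub_le_self h ht.1)
      fun q _ => hw.timeReverse.isRegularPoint _
    simp only [timeReverse, sub_sub_cancel, neg_inj] at hreversed
    convert! hreversed using 2
    ring

/-- The characteristic through a zero of the initial datum is vertical, and two characteristics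
that meet carry the same value. -/
lemma eq_zero_of_mem_uIcc (hw : IsBurgersSolution w h) (hh : 0 ≤ h) {x z : ℝ} (hz : w z 0 = 0)
    (hmem : z ∈ uIcc x (x + w x h * h)) : w x h = 0 := by
  rw [← segment_eq_uIcc] at hmem
  obtain ⟨a, b, ha, hb, hab, hcross⟩ := hmem
  have hah : a * h ∈ Icc 0 h := ⟨by positivity, mul_le_of_le_one_left hh (by linarith)⟩
  have hvertical := hw.eq_along_characteristic z (left_mem_Icc.2 hh) hah
  have hthrough := hw.eq_along_characteristic x (right_mem_Icc.2 hh) hah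
  have hmeet : x - w x h * (a * h - h) = z := by
    obtain rfl : b = 1 - a := by linarith
    rw [← hcross, smul_eq_mul, smul_eq_mul]
    ring
  rw [hz, zero_mul, sub_zero] at hvertical
  rw [← hthrough, hmeet, hvertical]

lemma mul_lt_one_of_initial_ge (hw : IsBurgersSolution w h) (hh : 0 ≤ h) {κ δ : ℝ} (hκ : 0 < κ)
    (hδ : 0 < δ) (hzero : w 0 0 = 0) (hinit : κ * δ ≤ w δ 0) : κ * h < 1 := by
  have hV : 0 < w δ 0 := (by positivity : 0 < κ * δ).trans_le hinit
  have hcarry : w (δ - w δ 0 * h) h = w δ 0 := by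
    simpa using hw.eq_along_characteristic δ (left_mem_Icc.2 hh) (right_mem_Icc.2 hh)
  by_contra! hκh
  refine hV.ne' (hcarry.symm.trans (hw.eq_zero_of_mem_uIcc hh hzero ?_))
  rw [hcarry, sub_add_cancel]
  refine Icc_subset_uIcc ⟨sub_nonpos.2 ?_, hδ.le⟩
  calc δ ≤ κ * h * δ := le_mul_of_one_le_left hδ.le hκh
    _ = κ * δ * h := by ring
    _ ≤ w δ 0 * h := by gcongr

lemma foot_mem_Icc (hw : IsBurgersSolution w h) (hh : 0 ≤ h) {L x : ℝ} (hzero : w 0 0 = 0)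
    (hL : w L 0 = 0) (hx : x ∈ Icc 0 L) : x + w x h * h ∈ Icc 0 L := by
  by_contra hout
  suffices hv : w x h = 0 from hout (by simpa [hv] using hx)
  rcases lt_or_ge (x + w x h * h) 0 with hneg | hpos
  · exact hw.eq_zero_of_mem_uIcc hh hzero (mem_uIcc_of_ge hneg.le hx.1)
  · exact hw.eq_zero_of_mem_uIcc hh hL
      (mem_uIcc_of_le hx.2 (lt_of_not_ge fun hle => hout ⟨hpos, hle⟩).le)

end IsBurgersSolution

lemma frontProfile_eq_min {κ H a L : ℝ} (hκ : 0 < κ) (hH : 0 < H) (ha : 0 < a)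
    (hδ : H / κ ≤ L - a) (x : ℝ) :
    frontProfile κ H a L x = min (κ * x) (min H (H / a * (L - x))) := by
  have hramp : κ * x ≤ H ↔ x ≤ H / κ := by rw [le_div_iff₀' hκ]
  have hdescent : H ≤ H / a * (L - x) ↔ x ≤ L - a := by
    rw [div_mul_eq_mul_div, le_div_iff₀ ha, mul_le_mul_iff_right₀ hH, le_sub_comm]
  unfold frontProfile
  split_ifs with hx hxa
  · rw [min_eq_left_iff.2 (hdescent.2 (hx.trans hδ)), min_eq_left (hramp.2 hx)]
  · rw [min_eq_left (hdescent.2 hxa), min_eq_right (not_le.1 (mt hramp.1 hx)).le]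
  · have hlow := (not_le.1 (mt hdescent.1 hxa)).le
    rw [min_eq_right hlow, min_eq_right (hlow.trans (not_le.1 (mt hramp.1 hx)).le)]

lemma frontProfile_nonneg {κ H a L x : ℝ} (hκ : 0 < κ) (hH : 0 < H) (ha : 0 < a)
    (hx : x ∈ Icc 0 L) : 0 ≤ frontProfile κ H a L x := by
  have h₀ := hx.1
  have hL : 0 ≤ L - x := sub_nonneg.2 hx.2
  unfold frontProfile
  split_ifs <;> positivity

lemma frontProfile_le_height {κ H a : ℝ} (hκ : 0 < κ) (hH : 0 ≤ H) (ha : 0 < a) (L x : ℝ) :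
    frontProfile κ H a L x ≤ H := by
  unfold frontProfile
  split_ifs with hx hxa
  · rwa [le_div_iff₀' hκ] at hx
  · exact le_rfl
  · rw [div_mul_eq_mul_div, div_le_iff₀ ha]
    gcongr
    linarith

/-- Below the plateau, the foot `y = x + v h` of the characteristic lies on the ramp or on the
descent of the original profile. A foot on the ramp means that `x` is on the steepened ramp. -/
lemma frontProfile_le_of_le_foot {κ H a L h S x v : ℝ} (hκ : 0 < κ) (hH : 0 < H) (ha : 0 < a)
    (hδ : H / κ ≤ L - a) (hh : 0 ≤ h) (hκh : κ * h < 1) (hHS : H ≤ S) (hv : 0 ≤ v)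
    (hfoot : frontProfile κ H a L (x + v * h) ≤ v) :
    frontProfile (κ / (1 - κ * h)) H (a + S * h) L x ≤ v := by
  have hκh' : 0 < 1 - κ * h := sub_pos.2 hκh
  have hS : 0 ≤ S := hH.le.trans hHS
  rcases le_or_gt H v with hHv | hvH
  · exact (frontProfile_le_height (by positivity) hH.le (by positivity) L x).trans hHv
  have hvh : v * h ≤ H * h := by gcongr
  have hvSh : v * H * h ≤ v * S * h := by gcongr
  have hHSh : H * h ≤ S * h := by gcongr
  have hδ' : H / (κ / (1 - κ * h)) = H / κ - H * h := by field_simp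
  have hsteep : κ / (1 - κ * h) * x ≤ v ↔ κ * (x + v * h) ≤ v := by
    rw [div_mul_eq_mul_div, div_le_iff₀ hκh']
    constructor <;> intro <;> linarith
  have hpieces : κ * (x + v * h) ≤ v ∨ H * (L - (x + v * h)) ≤ v * a := by
    rw [frontProfile_eq_min hκ hH ha hδ, min_le_iff, min_le_iff, div_mul_eq_mul_div,
      div_le_iff₀ ha] at hfoot
    exact hfoot.imp_right fun hor => hor.resolve_left hvH.not_ge
  have hdescent : H * (L - (x + v * h)) ≤ v * a → L - a < x + v * h := fun hle => by
    have hHa : H * (L - (x + v * h)) < H * a := hle.trans_lt (by gcongr)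
    linarith [lt_of_mul_lt_mul_left hHa hH.le]
  have hramp : κ * (x + v * h) ≤ v → x ≤ H / (κ / (1 - κ * h)) := fun hle => by
    rw [le_div_iff₀' (by positivity)]
    exact (hsteep.2 hle).trans hvH.le
  unfold frontProfile
  split_ifs with hx hxa
  · refine hsteep.2 (hpieces.resolve_right fun hle => ?_)
    linarith [hdescent hle]
  · have := hdescent (hpieces.resolve_left fun hle => hx (hramp hle))
    linarith
  · have := hpieces.resolve_left fun hle => hx (hramp hle)
    rw [div_mul_eq_mul_div, div_le_iff₀ (by positivity)]
    linarith

theorem burgers_steepening_step_general {κ H a L h S : ℝ} {w : ℝ → ℝ → ℝ} (hκ : 0 < κ)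
    (hH : 0 < H) (ha : 0 < a) (hδ : H / κ ≤ L - a) (hh : 0 ≤ h) (hw : IsBurgersSolution w h)
    (hw₀ : w 0 0 = 0) (hwL : w L 0 = 0)
    (hfront : ∀ x ∈ Icc 0 L, frontProfile κ H a L x ≤ w x 0) (hHS : H ≤ S) :
    κ * h < 1 ∧ ∀ x ∈ Icc 0 L, frontProfile (κ / (1 - κ * h)) H (a + S * h) L x ≤ w x h := by
  have hδpos : 0 < H / κ := by positivity
  have hpeak : κ * (H / κ) ≤ w (H / κ) 0 := by
    simpa [frontProfile] using hfront (H / κ) ⟨hδpos.le, by linarith⟩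
  have hκh : κ * h < 1 := hw.mul_lt_one_of_initial_ge hh hκ hδpos hw₀ hpeak
  refine ⟨hκh, fun x hx => ?_⟩
  have hfoot : x + w x h * h ∈ Icc 0 L := hw.foot_mem_Icc hh hw₀ hwL hx
  have hcarry : w (x + w x h * h) 0 = w x h := by
    simpa using hw.eq_along_characteristic x (right_mem_Icc.2 hh) (left_mem_Icc.2 hh)
  have hle : frontProfile κ H a L (x + w x h * h) ≤ w x h := (hfront _ hfoot).trans_eq hcarry
  exact frontProfile_le_of_le_foot hκ hH ha hδ hh hκh hHS
    ((frontProfile_nonneg hκ hH ha hfoot).trans hle) hle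

/-- **Steepening under the inviscid Burgers step (Lemma burstep).**
There is an absolute constant `c > 0` such that: if `θ₀` is smooth, `2L`-periodic, odd, with
`θ₀(L) = 0`, `‖θ₀‖_{C³} ≤ N`, and `θ₀ ≥ φ(κ,H,a,·)` on `[0,L]`, and `w` is a classical `C³`
solution of `∂_t w = w ∂_x w` with `w(·,0) = θ₀` on `[0,h]` with `h ≤ c/N`, then
`w(·,h) ≥ φ(κ/(1−κh), H, a + ‖θ₀‖_∞ h, ·)` on `[0,L]`. -/
theorem burgers_steepening_step :
    ∃ c > (0:ℝ), ∀ (κ H a L h N : ℝ) (θ₀ : ℝ → ℝ) (w : ℝ → ℝ → ℝ),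
      0 < κ → 0 < H → 0 < a → 0 < L → H / κ ≤ L / 4 → a ≤ L / 4 →
      ContDiff ℝ (⊤ : ℕ∞) θ₀ → Function.Periodic θ₀ (2 * L) →
      (∀ x, θ₀ (-x) = -θ₀ x) → θ₀ L = 0 →
      (∀ x ∈ Icc (0:ℝ) L, frontProfile κ H a L x ≤ θ₀ x) →
      0 < N → (∀ j ≤ 3, ∀ x, |iteratedDeriv j θ₀ x| ≤ N) →
      0 < h → h ≤ c / N →
      (∀ t ∈ Icc (0:ℝ) h, ContDiff ℝ 3 (fun x => w x t)) →
      (∀ x, w x 0 = θ₀ x) →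
      (∀ x, ∀ t ∈ Icc (0:ℝ) h,
        HasDerivWithinAt (fun s => w x s)
          (w x t * deriv (fun x' => w x' t) x) (Icc 0 h) t) →
      ∀ x ∈ Icc (0:ℝ) L,
        frontProfile (κ / (1 - κ * h)) H (a + (⨆ x', |θ₀ x'|) * h) L x ≤ w x h := by
  refine ⟨1, one_pos, fun κ H a L h N θ₀ w hκ hH ha _ hδ haL _ _ hodd hθL hfront _ hN hh _ hC hw₀
    hder => ?_⟩
  have hw : IsBurgersSolution w h := ⟨fun t ht => (hC t ht).of_le (by norm_num), hder⟩
  have hplateau : H ≤ θ₀ (H / κ) := by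
    simpa [frontProfile, mul_div_cancel₀ H hκ.ne'] using
      hfront (H / κ) ⟨by positivity, by linarith⟩
  have hbdd : BddAbove (range fun x => |θ₀ x|) :=
    ⟨N, forall_mem_range.2 fun x => by simpa using hN 0 (by norm_num) x⟩
  have hHS : H ≤ ⨆ x, |θ₀ x| := (hplateau.trans (le_abs_self _)).trans (le_ciSup hbdd _)
  have hzero : w 0 0 = 0 := by
    rw [hw₀]
    exact self_eq_neg.1 (by simpa using hodd 0)
  refine (burgers_steepening_step_general hκ hH ha (by linarith) hh.le hw hzero ?_ ?_ hHS).2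
  · rw [hw₀, hθL]
  · simpa only [hw₀] using hfront

end
end

section
/- Monotone quantity for the blow-up ODE system (Lemma conlaw): Fix 0 < α < 1/2 and C > 0. Let κ, H : [0,T] → (0,∞) be differentiable functions satisfying the system κ'(t) = κ(t)² − C κ(t)^{1+2α} H(t)^{−2α} and H'(t) = −C κ(t)^{2α} H(t)^{1−2α} on [0,T]. If the initial data satisfy H(0)^{2α} κ(0)^{1−2α} ≥ C/(1−2α), then the function t ↦ H(t)^{2α} κ(t)^{1−2α} is non-decreasing on [0,T]. -/
open Set

/-!
Write `s = C (κ / H) ^ (2α)` and `Q = H ^ (2α) κ ^ (1 - 2α)`. In terms of relative rates the system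
reads `κ' / κ = κ - s`, `H' / H = -s`, and `s Q = C κ`, whence `Q' = κ W` with `W = (1 - 2α) Q - C`.
Thus `W` solves the linear equation `W' = (1 - 2α) κ W`. So does `(κ / H) ^ (1 - 2α)`, because
`(κ / H)' / (κ / H) = κ`; hence `W` is a constant multiple of this positive function and keeps
its initial sign.
-/

section LinearODE

lemma div_eq_div_of_hasDerivWithinAt_mul_self {𝕜 : Type*} [RCLike 𝕜] {D : Set 𝕜} {f g r : 𝕜 → 𝕜}
    (hD : Convex ℝ D) (hf : ∀ t ∈ D, HasDerivWithinAt f (r t * f t) D t)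
    (hg : ∀ t ∈ D, HasDerivWithinAt g (r t * g t) D t) (hg₀ : ∀ t ∈ D, g t ≠ 0)
    {x y : 𝕜} (hx : x ∈ D) (hy : y ∈ D) : f x / g x = f y / g y := by
  have hderiv : ∀ t ∈ D, HasDerivWithinAt (fun u => f u / g u) 0 D t := fun t ht =>
    ((hf t ht).fun_div (hg t ht) (hg₀ t ht)).congr_deriv (by ring)
  have hle := hD.norm_image_sub_le_of_norm_hasDerivWithin_le (C := 0) hderiv (by simp) hy hx
  rwa [zero_mul, norm_le_zero_iff, sub_eq_zero] at hle

lemma nonneg_of_hasDerivWithinAt_mul_self {D : Set ℝ} {f g r : ℝ → ℝ}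
    (hD : Convex ℝ D) (hf : ∀ t ∈ D, HasDerivWithinAt f (r t * f t) D t)
    (hg : ∀ t ∈ D, HasDerivWithinAt g (r t * g t) D t) (hg_pos : ∀ t ∈ D, 0 < g t)
    {t₀ t : ℝ} (ht₀ : t₀ ∈ D) (hf₀ : 0 ≤ f t₀) (ht : t ∈ D) : 0 ≤ f t := by
  have hratio : f t / g t = f t₀ / g t₀ :=
    div_eq_div_of_hasDerivWithinAt_mul_self hD hf hg (fun u hu => (hg_pos u hu).ne') ht ht₀
  rw [(div_eq_iff (hg_pos t ht).ne').1 hratio]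
  exact mul_nonneg (div_nonneg hf₀ (hg_pos t₀ ht₀).le) (hg_pos t ht).le

lemma hasDerivWithinAt_rpow_mul_rpow {D : Set ℝ} {f g : ℝ → ℝ} {a b t : ℝ}
    (hf : HasDerivWithinAt f (a * f t) D t) (hg : HasDerivWithinAt g (b * g t) D t)
    (hf₀ : f t ≠ 0) (hg₀ : g t ≠ 0) (p q : ℝ) :
    HasDerivWithinAt (fun u => f u ^ p * g u ^ q)
      ((p * a + q * b) * (f t ^ p * g t ^ q)) D t := by
  refine ((hf.rpow_const (p := p) (.inl hf₀)).fun_mul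
    (hg.rpow_const (p := q) (.inl hg₀))).congr_deriv ?_
  rw [Real.rpow_sub_one hf₀, Real.rpow_sub_one hg₀]
  field_simp

end LinearODE

/-- A positive solution `(κ, H)` of the blow-up system on a set `D` of times. Derivatives are taken
within `D`, hence are one-sided at the end points of an interval. -/
structure IsBlowupSolution (α C : ℝ) (κ H : ℝ → ℝ) (D : Set ℝ) : Prop where
  κ_pos : ∀ t ∈ D, 0 < κ t
  H_pos : ∀ t ∈ D, 0 < H t
  hasDerivWithinAt_κ : ∀ t ∈ D, HasDerivWithinAt κ
    (κ t ^ (2 : ℕ) - C * κ t ^ (1 + 2 * α) * H t ^ (-(2 * α))) D t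
  hasDerivWithinAt_H : ∀ t ∈ D, HasDerivWithinAt H
    (-(C * κ t ^ (2 * α) * H t ^ (1 - 2 * α))) D t

namespace IsBlowupSolution

/-- The relative decay rate `-H' / H` of the second component of the blow-up system, as a function
of the values `k` and `h` of `κ` and `H`. -/
noncomputable def decayRate (α C k h : ℝ) : ℝ := C * (k / h) ^ (2 * α)

lemma decayRate_mul_rpow_mul_rpow {k h : ℝ} (hk : 0 < k) (hh : 0 < h) (α C : ℝ) :
    decayRate α C k h * (h ^ (2 * α) * k ^ (1 - 2 * α)) = C * k := by
  rw [decayRate, Real.div_rpow hk.le hh.le, Real.rpow_sub hk, Real.rpow_one]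
  field_simp

variable {α C t t₀ : ℝ} {κ H : ℝ → ℝ} {D : Set ℝ}

lemma hasDerivWithinAt_κ_mul_self (h : IsBlowupSolution α C κ H D) (ht : t ∈ D) :
    HasDerivWithinAt κ ((κ t - decayRate α C (κ t) (H t)) * κ t) D t := by
  have hκ := h.κ_pos t ht
  have hH := h.H_pos t ht
  refine (h.hasDerivWithinAt_κ t ht).congr_deriv ?_
  rw [decayRate, Real.div_rpow hκ.le hH.le, Real.rpow_add hκ, Real.rpow_one, Real.rpow_neg hH.le]
  ring

lemma hasDerivWithinAt_H_mul_self (h : IsBlowupSolution α C κ H D) (ht : t ∈ D) :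
    HasDerivWithinAt H (-decayRate α C (κ t) (H t) * H t) D t := by
  have hH := h.H_pos t ht
  refine (h.hasDerivWithinAt_H t ht).congr_deriv ?_
  rw [decayRate, Real.div_rpow (h.κ_pos t ht).le hH.le, Real.rpow_sub hH, Real.rpow_one]
  ring

lemma hasDerivWithinAt_κ_rpow_mul_H_rpow_neg (h : IsBlowupSolution α C κ H D) (ht : t ∈ D)
    (p : ℝ) :
    HasDerivWithinAt (fun u => κ u ^ p * H u ^ (-p)) (p * κ t * (κ t ^ p * H t ^ (-p))) D t :=
  (hasDerivWithinAt_rpow_mul_rpow (h.hasDerivWithinAt_κ_mul_self ht)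
    (h.hasDerivWithinAt_H_mul_self ht) (h.κ_pos t ht).ne' (h.H_pos t ht).ne' p (-p)).congr_deriv
    (by ring)

lemma hasDerivWithinAt_H_rpow_mul_κ_rpow (h : IsBlowupSolution α C κ H D) (ht : t ∈ D) :
    HasDerivWithinAt (fun u => H u ^ (2 * α) * κ u ^ (1 - 2 * α))
      (κ t * ((1 - 2 * α) * (H t ^ (2 * α) * κ t ^ (1 - 2 * α)) - C)) D t := by
  refine (hasDerivWithinAt_rpow_mul_rpow (h.hasDerivWithinAt_H_mul_self ht)
    (h.hasDerivWithinAt_κ_mul_self ht) (h.H_pos t ht).ne' (h.κ_pos t ht).ne' _ _).congr_deriv ?_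
  linear_combination -decayRate_mul_rpow_mul_rpow (h.κ_pos t ht) (h.H_pos t ht) α C

lemma le_mul_H_rpow_mul_κ_rpow (h : IsBlowupSolution α C κ H D) (hD : Convex ℝ D) (ht₀ : t₀ ∈ D)
    (hinit : C ≤ (1 - 2 * α) * (H t₀ ^ (2 * α) * κ t₀ ^ (1 - 2 * α))) (ht : t ∈ D) :
    C ≤ (1 - 2 * α) * (H t ^ (2 * α) * κ t ^ (1 - 2 * α)) := by
  have hderiv : ∀ u ∈ D, HasDerivWithinAt
      (fun v => (1 - 2 * α) * (H v ^ (2 * α) * κ v ^ (1 - 2 * α)) - C)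
      ((1 - 2 * α) * κ u * ((1 - 2 * α) * (H u ^ (2 * α) * κ u ^ (1 - 2 * α)) - C)) D u :=
    fun u hu => (((h.hasDerivWithinAt_H_rpow_mul_κ_rpow hu).const_mul _).sub_const C).congr_deriv
      (by ring)
  exact sub_nonneg.1 <| nonneg_of_hasDerivWithinAt_mul_self hD hderiv
    (fun u hu => h.hasDerivWithinAt_κ_rpow_mul_H_rpow_neg hu (1 - 2 * α))
    (fun u hu => mul_pos (Real.rpow_pos_of_pos (h.κ_pos u hu) _)
      (Real.rpow_pos_of_pos (h.H_pos u hu) _))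
    ht₀ (sub_nonneg.2 hinit) ht

end IsBlowupSolution

theorem blowup_ode_monotone_general {α C t₀ : ℝ} {κ H : ℝ → ℝ} {D : Set ℝ} (hD : Convex ℝ D)
    (h : IsBlowupSolution α C κ H D) (ht₀ : t₀ ∈ D)
    (hinit : C ≤ (1 - 2 * α) * (H t₀ ^ (2 * α) * κ t₀ ^ (1 - 2 * α))) :
    MonotoneOn (fun t => H t ^ (2 * α) * κ t ^ (1 - 2 * α)) D := by
  have hderiv := fun t (ht : t ∈ D) => h.hasDerivWithinAt_H_rpow_mul_κ_rpow ht
  refine monotoneOn_of_hasDerivWithinAt_nonneg hD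
    (fun t ht => (hderiv t ht).continuousWithinAt)
    (fun t ht => (hderiv t (interior_subset ht)).mono interior_subset) fun t ht => ?_
  have htD : t ∈ D := interior_subset ht
  exact mul_nonneg (h.κ_pos t htD).le
    (sub_nonneg.2 (h.le_mul_H_rpow_mul_κ_rpow hD ht₀ hinit htD))

/-- **Monotone quantity for the blow-up ODE system.**
If `κ' = κ² − C κ^{1+2α} H^{−2α}` and `H' = −C κ^{2α} H^{1−2α}` on `[0,T]` with
`H(0)^{2α} κ(0)^{1−2α} ≥ C/(1−2α)`, then `t ↦ H(t)^{2α} κ(t)^{1−2α}` is non-decreasing. -/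
theorem blowup_ode_monotone (α C T : ℝ) (hα0 : 0 < α) (hα : α < 1/2) (hC : 0 < C)
    (κ H : ℝ → ℝ)
    (hκpos : ∀ t ∈ Icc (0:ℝ) T, 0 < κ t)
    (hHpos : ∀ t ∈ Icc (0:ℝ) T, 0 < H t)
    (hκ' : ∀ t ∈ Icc (0:ℝ) T,
      HasDerivWithinAt κ (κ t ^ (2:ℕ) - C * κ t ^ (1 + 2*α) * H t ^ (-(2*α))) (Icc 0 T) t)
    (hH' : ∀ t ∈ Icc (0:ℝ) T,
      HasDerivWithinAt H (-(C * κ t ^ (2*α) * H t ^ (1 - 2*α))) (Icc 0 T) t)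
    (hinit : C / (1 - 2*α) ≤ H 0 ^ (2*α) * κ 0 ^ (1 - 2*α)) :
    MonotoneOn (fun t => H t ^ (2*α) * κ t ^ (1 - 2*α)) (Icc 0 T) := by
  intro x hx y hy hxy
  exact blowup_ode_monotone_general (convex_Icc 0 T) ⟨hκpos, hHpos, hκ', hH'⟩
    ⟨le_rfl, hx.1.trans hx.2⟩ ((div_le_iff₀' (by linarith)).1 hinit) hx hy hxy
end

section
/- Finite time blow up for the supercritical Burgers equation (Theorem on supercritical Burgers blow-up): Let 0 < α < 1/2. There exist L > 0, T > 0, and smooth 2L-periodic initial data θ₀ : ℝ → ℝ such that there is no function θ : ℝ × [0,T] → ℝ which is 2L-periodic in x, continuously differentiable in t, three times continuously differentiable in x with sup_{0 ≤ t ≤ T} ‖θ(·,t)‖_{C³} < ∞, and which solves ∂_t θ = θ ∂_x θ − L_α θ classically on ℝ × [0,T] with θ(·,0) = θ₀, where L_α f(x) = P.V. ∫_ℝ (f(x) − f(x+y))/|y|^{1+2α} dy. (That is, any solution starting from θ₀ must lose C³ regularity by time T.) -/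
open Set MeasureTheory Filter Topology

/-!
For a `2L`-periodic solution `θ` consider the sawtooth transform
`F(X, t) = ∫₀^{2L} θ(X + y, t) (L - y) dy`. At a spatial maximum `X` of `F(·, t)` the derivative
`∂_X F = ∫ θ - 2L θ(X, t)` vanishes, so `θ(X, t)` is the mean of `θ(·, t)`. Integrating `θ ∂ₓθ` by
parts against `L - y` therefore leaves half of `∫ (θ - θ(X, t))²`, which is at least `3F²/(4L³)` by
the Cauchy-Schwarz inequality. The dissipation enters through `(-Δ)^α F(X, t)`. Since `F` is bounded
and Lipschitz in terms of `sup |θ|` alone, and `α < 1/2`, this term is `O(sup |θ|)`, and `sup |θ|`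
does not grow by the maximum principle. Applied to the time reversal of `F`, the maximum principle
turns these estimates into growth of `sup F`: for data of amplitude `A` its rate is quadratic in
`A`, up to an error linear in `A`, while `|F| ≤ 2L²A`. For large `A` this bound fails before time
`T`.
-/

open scoped NNReal

namespace FractionalBurgers

/-! ### The fractional Laplacian of a bounded Lipschitz function -/

lemma integrable_min_div_rpow {p : ℝ} (hp₁ : 1 < p) (hp₂ : p < 2) :
    Integrable (fun z : ℝ => min |z| 1 / |z| ^ p) := by
  have near : IntegrableOn (fun z : ℝ => min |z| 1 / |z| ^ p) (Ioc 0 1) := by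
    refine (intervalIntegral.intervalIntegrable_rpow' (r := 1 - p) (by linarith)).1.congr_fun
      (fun z hz => ?_) measurableSet_Ioc
    simp only [abs_of_pos hz.1, min_eq_left hz.2, Real.rpow_sub hz.1, Real.rpow_one]
  have far : IntegrableOn (fun z : ℝ => min |z| 1 / |z| ^ p) (Ioi 1) := by
    refine (integrableOn_Ioi_rpow_of_lt (a := -p) (by linarith) one_pos).congr_fun
      (fun z (hz : 1 < z) => ?_) measurableSet_Ioi
    have hz₀ : 0 < z := one_pos.trans hz
    simp only [abs_of_pos hz₀, min_eq_right hz.le, Real.rpow_neg hz₀.le, one_div]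
  have right : IntegrableOn (fun z : ℝ => min |z| 1 / |z| ^ p) (Ioi 0) := by
    rw [← Ioc_union_Ioi_eq_Ioi zero_le_one]
    exact near.union far
  have left : IntegrableOn (fun z : ℝ => min |z| 1 / |z| ^ p) (Iio 0) := by
    simpa using right.comp_neg
  rw [← integrableOn_univ, ← Iic_union_Ioi (a := (0 : ℝ))]
  exact ((integrableOn_Iic_iff_integrableOn_Iio (by simp)).2 left).union right

/-- The mass `∫ min(|z|, 1) |z|^{-1-2α} dz`, which controls the fractional Laplacian of bounded
Lipschitz functions. -/
noncomputable def kernelMass (α : ℝ) : ℝ := ∫ z : ℝ, min |z| 1 / |z| ^ (1 + 2 * α)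

lemma kernelMass_nonneg (α : ℝ) : 0 ≤ kernelMass α := integral_nonneg fun _ => by positivity

/-- The fractional Laplacian `(-Δ)^α` up to normalization. For `0 < α < 1/2` the integral converges
absolutely on bounded Lipschitz functions, so no principal value appears in the definition. -/
noncomputable def fracLaplacian (α : ℝ) (f : ℝ → ℝ) (x : ℝ) : ℝ :=
  ∫ z, (f x - f (x + z)) / |z| ^ (1 + 2 * α)

lemma fracLaplacian_neg (α : ℝ) (f : ℝ → ℝ) (x : ℝ) :
    fracLaplacian α (fun y => -f y) x = -fracLaplacian α f x := by
  simp only [fracLaplacian, ← integral_neg]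
  congr 1 with z
  ring

lemma fracLaplacian_nonneg_of_forall_le {f : ℝ → ℝ} {x : ℝ} (α : ℝ) (hx : ∀ y, f y ≤ f x) :
    0 ≤ fracLaplacian α f x :=
  integral_nonneg fun _ => div_nonneg (sub_nonneg.2 (hx _)) (by positivity)

lemma tendsto_setIntegral_lt_abs {E : Type*} [NormedAddCommGroup E] [NormedSpace ℝ E] {g : ℝ → E}
    (hg : Integrable g) :
    Tendsto (fun ε => ∫ y in {y : ℝ | ε < |y|}, g y) (𝓝[>] 0) (𝓝 (∫ y, g y)) := by
  have cover : AECover volume (𝓝[>] (0 : ℝ)) fun ε => {y : ℝ | ε < |y|} :=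
    { ae_eventually_mem := by
        filter_upwards [Measure.ae_ne volume 0] with y hy
        exact nhdsWithin_le_nhds (eventually_lt_nhds (abs_pos.2 hy))
      measurableSet := fun ε => measurableSet_lt measurable_const measurable_norm }
  exact cover.integral_tendsto_of_countably_generated hg

section BoundedLipschitz

variable {α A : ℝ} {f : ℝ → ℝ} {K : ℝ≥0}

lemma abs_sub_add_le_mul_min (hf : LipschitzWith K f) (hA : ∀ x, |f x| ≤ A) (x z : ℝ) :
    |f x - f (x + z)| ≤ (K + 2 * A) * min |z| 1 := by
  have hA₀ : 0 ≤ A := (abs_nonneg _).trans (hA 0)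
  rcases le_total |z| 1 with hz | hz
  · have hlip : |f x - f (x + z)| ≤ K * |z| := by
      simpa [Real.dist_eq] using hf.dist_le_mul x (x + z)
    rw [min_eq_left hz]
    nlinarith [abs_nonneg z]
  · rw [min_eq_right hz]
    linarith [abs_sub (f x) (f (x + z)), hA x, hA (x + z), K.coe_nonneg]

lemma abs_sub_add_div_rpow_le (hf : LipschitzWith K f) (hA : ∀ x, |f x| ≤ A) (p x z : ℝ) :
    |(f x - f (x + z)) / |z| ^ p| ≤ (K + 2 * A) * (min |z| 1 / |z| ^ p) := by
  rw [abs_div, abs_of_nonneg (show 0 ≤ |z| ^ p by positivity), ← mul_div_assoc]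
  gcongr
  exact abs_sub_add_le_mul_min hf hA x z

lemma integrable_fracLaplacian_integrand (hα₀ : 0 < α) (hα : α < 1 / 2) (hf : LipschitzWith K f)
    (hA : ∀ x, |f x| ≤ A) (x : ℝ) :
    Integrable fun z => (f x - f (x + z)) / |z| ^ (1 + 2 * α) := by
  have hf_cont := hf.continuous
  have hint := integrable_min_div_rpow (p := 1 + 2 * α) (by linarith) (by linarith)
  exact (hint.const_mul (K + 2 * A)).mono' (Measurable.aestronglyMeasurable (by fun_prop))
    (ae_of_all _ fun z => abs_sub_add_div_rpow_le hf hA _ x z)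

lemma abs_fracLaplacian_le (hα₀ : 0 < α) (hα : α < 1 / 2) (hf : LipschitzWith K f)
    (hA : ∀ x, |f x| ≤ A) (x : ℝ) : |fracLaplacian α f x| ≤ (K + 2 * A) * kernelMass α := by
  rw [← Real.norm_eq_abs, fracLaplacian, kernelMass, ← integral_const_mul]
  have hint := integrable_min_div_rpow (p := 1 + 2 * α) (by linarith) (by linarith)
  exact norm_integral_le_of_norm_le (hint.const_mul (K + 2 * A))
    (ae_of_all _ fun z => abs_sub_add_div_rpow_le hf hA _ x z)

lemma continuous_fracLaplacian (hα₀ : 0 < α) (hα : α < 1 / 2) (hf : LipschitzWith K f)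
    (hA : ∀ x, |f x| ≤ A) : Continuous (fracLaplacian α f) := by
  have hf_cont := hf.continuous
  refine continuous_of_dominated (fun x => Measurable.aestronglyMeasurable (by fun_prop))
    (fun x => ae_of_all _ fun z => abs_sub_add_div_rpow_le hf hA _ x z)
    ((integrable_min_div_rpow (p := 1 + 2 * α) (by linarith) (by linarith)).const_mul _)
    (ae_of_all _ fun z => by fun_prop)

lemma intervalIntegral_fracLaplacian_mul (hα₀ : 0 < α) (hα : α < 1 / 2) (hf : LipschitzWith K f)
    (hA : ∀ x, |f x| ≤ A) {w : ℝ → ℝ} {a b : ℝ} (hw : IntervalIntegrable w volume a b) (x : ℝ) :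
    ∫ y in a..b, fracLaplacian α f (x + y) * w y =
      fracLaplacian α (fun x => ∫ y in a..b, f (x + y) * w y) x := by
  have hf_cont := hf.continuous
  have hfw (x : ℝ) : IntervalIntegrable (fun y => f (x + y) * w y) volume a b :=
    hw.continuousOn_mul (by fun_prop)
  have fubini : Integrable
      (fun q : ℝ × ℝ => w q.1 * ((f (x + q.1) - f (x + q.1 + q.2)) / |q.2| ^ (1 + 2 * α)))
      ((volume.restrict (uIoc a b)).prod volume) := by
    have bound := hw.def'.mul_prod
      ((integrable_min_div_rpow (p := 1 + 2 * α) (by linarith) (by linarith)).const_mul (K + 2 * A))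
    refine bound.mono (hw.def'.aestronglyMeasurable.comp_fst.mul
      (Measurable.aestronglyMeasurable (by fun_prop))) (ae_of_all _ fun q => ?_)
    simp only [norm_mul (w q.1)]
    gcongr
    exact (abs_sub_add_div_rpow_le hf hA _ _ _).trans (le_abs_self _)
  calc ∫ y in a..b, fracLaplacian α f (x + y) * w y
      = ∫ y in a..b, ∫ z, w y * ((f (x + y) - f (x + y + z)) / |z| ^ (1 + 2 * α)) := by
        simp only [fracLaplacian, mul_comm, ← integral_const_mul]
    _ = ∫ z, ∫ y in a..b, w y * ((f (x + y) - f (x + y + z)) / |z| ^ (1 + 2 * α)) :=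
        intervalIntegral_integral_swap fubini
    _ = fracLaplacian α (fun x => ∫ y in a..b, f (x + y) * w y) x := by
        simp only [fracLaplacian]
        congr 1 with z
        rw [← intervalIntegral.integral_sub (hfw x) (hfw (x + z)), ← intervalIntegral.integral_div]
        congr 1 with y
        rw [add_right_comm]
        ring

end BoundedLipschitz

/-! ### Calculus on intervals -/

lemma hasDerivWithinAt_integral_of_dominated {Ω E : Type*} [MeasurableSpace Ω] {μ : Measure Ω}
    [NormedAddCommGroup E] [NormedSpace ℝ E] {s : Set ℝ} (hs : Convex ℝ s) {F F' : ℝ → Ω → E}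
    {bound : Ω → ℝ} (hF : ∀ t ∈ s, Integrable (F t) μ) (hbound : Integrable bound μ)
    (hF' : ∀ t ∈ s, ∀ ω, ‖F' t ω‖ ≤ bound ω)
    (hderiv : ∀ t ∈ s, ∀ ω, HasDerivWithinAt (F · ω) (F' t ω) s t) {t : ℝ} (ht : t ∈ s) :
    HasDerivWithinAt (fun t => ∫ ω, F t ω ∂μ) (∫ ω, F' t ω ∂μ) s t := by
  rw [hasDerivWithinAt_iff_tendsto_slope]
  have lim : Tendsto (fun r => ∫ ω, slope (F · ω) t r ∂μ) (𝓝[s \ {t}] t) (𝓝 (∫ ω, F' t ω ∂μ)) := by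
    refine tendsto_integral_filter_of_dominated_convergence bound ?_ ?_ hbound
      (ae_of_all _ fun ω => hasDerivWithinAt_iff_tendsto_slope.1 (hderiv t ht ω))
    · filter_upwards [self_mem_nhdsWithin] with r hr
      simp only [slope_def_module]
      exact (((hF r hr.1).sub (hF t ht)).smul (r - t)⁻¹).aestronglyMeasurable
    · filter_upwards [self_mem_nhdsWithin] with r hr
      refine ae_of_all _ fun ω => ?_
      have mean_value := hs.norm_image_sub_le_of_norm_hasDerivWithin_le
        (fun τ hτ => hderiv τ hτ ω) (fun τ hτ => hF' τ hτ ω) ht hr.1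
      rw [slope_def_module, norm_smul, norm_inv]
      exact inv_mul_le_of_le_mul₀ (norm_nonneg _) ((norm_nonneg _).trans (hF' t ht ω))
        (mean_value.trans_eq (mul_comm _ _))
  refine lim.congr' ?_
  filter_upwards [self_mem_nhdsWithin] with r hr
  simp only [slope_def_module]
  rw [integral_smul, integral_sub (hF r hr.1) (hF t ht)]

lemma hasDerivAt_integral_add_const {E : Type*} [NormedAddCommGroup E] [NormedSpace ℝ E]
    [CompleteSpace E] {g : ℝ → E} (hg : Continuous g) (p x : ℝ) :
    HasDerivAt (fun x => ∫ u in x..x + p, g u) (g (x + p) - g x) x := by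
  have primitive (y : ℝ) : HasDerivAt (fun y => ∫ u in (0 : ℝ)..y, g u) (g y) y :=
    (hg.integral_hasStrictDerivAt 0 y).hasDerivAt
  refine (((primitive (x + p)).comp_add_const x p).sub (primitive x)).congr_of_eventuallyEq
    (Eventually.of_forall fun y => ?_)
  exact (intervalIntegral.integral_interval_sub_left (hg.intervalIntegrable _ _)
    (hg.intervalIntegrable _ _)).symm

lemma sq_intervalIntegral_mul_le {f g : ℝ → ℝ} {a b : ℝ} (hab : a ≤ b)
    (hf : Continuous f) (hg : Continuous g) :
    (∫ y in a..b, f y * g y) ^ 2 ≤ (∫ y in a..b, f y ^ 2) * ∫ y in a..b, g y ^ 2 := by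
  have quadratic (s : ℝ) : 0 ≤ (∫ y in a..b, g y ^ 2) * (s * s)
      + 2 * (∫ y in a..b, f y * g y) * s + ∫ y in a..b, f y ^ 2 := by
    have hint {h : ℝ → ℝ} (hh : Continuous h) : IntervalIntegrable h volume a b :=
      hh.intervalIntegrable a b
    calc 0 ≤ ∫ y in a..b, (f y + s * g y) ^ 2 :=
          intervalIntegral.integral_nonneg hab fun _ _ => sq_nonneg _
      _ = ∫ y in a..b, (g y ^ 2 * (s * s) + 2 * (f y * g y) * s + f y ^ 2) := by
          congr 1 with y
          ring
      _ = _ := by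
          rw [intervalIntegral.integral_add (hint (by fun_prop)) (hint (by fun_prop)),
            intervalIntegral.integral_add (hint (by fun_prop)) (hint (by fun_prop)),
            intervalIntegral.integral_mul_const, intervalIntegral.integral_mul_const,
            intervalIntegral.integral_const_mul]
  have := discrim_le_zero quadratic
  rw [discrim] at this
  linarith

lemma le_of_isMaxOn_Icc_of_periodic {β : Type*} [Preorder β] {f : ℝ → β} {p x : ℝ} (hp : 0 < p)
    (hf : Function.Periodic f p) (hx : IsMaxOn f (Icc 0 p) x) (y : ℝ) : f y ≤ f x := by
  obtain ⟨y', hy', hyy'⟩ := hf.exists_mem_Ico₀ hp y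
  exact hyy'.trans_le (hx (Ico_subset_Icc_self hy'))

/-! ### Maximum principles -/

lemma le_of_deriv_nonpos_of_isMaxOn {X : Type*} [TopologicalSpace X] {s : Set X} (hs : IsCompact s)
    {u u' : X → ℝ → ℝ} {T A : ℝ}
    (hcont : ContinuousOn (fun q : X × ℝ => u q.1 q.2) (s ×ˢ Icc 0 T))
    (hderiv : ∀ x ∈ s, ∀ t ∈ Icc 0 T, HasDerivWithinAt (u x) (u' x t) (Icc 0 T) t)
    (hmax : ∀ t ∈ Icc 0 T, ∀ x ∈ s, IsMaxOn (u · t) s x → A < u x t → u' x t ≤ 0)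
    (hinit : ∀ x ∈ s, u x 0 ≤ A) {t : ℝ} (ht : t ∈ Icc 0 T) {x : X} (hx : x ∈ s) :
    u x t ≤ A := by
  suffices perturbed : ∀ ε > 0, u x t - ε * t ≤ A by
    have lim : Tendsto (fun ε => u x t - ε * t) (𝓝[>] 0) (𝓝 (u x t - 0 * t)) :=
      ((Continuous.tendsto (by fun_prop) 0).mono_left nhdsWithin_le_nhds)
    rw [zero_mul, sub_zero] at lim
    exact le_of_tendsto lim (eventually_mem_nhdsWithin.mono perturbed)
  intro ε hε
  obtain ⟨⟨x₀, t₀⟩, ⟨hx₀, ht₀⟩, hq⟩ := (hs.prod isCompact_Icc).exists_isMaxOn ⟨(x, t), hx, ht⟩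
    (hcont.sub (g := fun q : X × ℝ => ε * q.2) (by fun_prop))
  replace hx₀ : x₀ ∈ s := hx₀
  replace ht₀ : t₀ ∈ Icc 0 T := ht₀
  have le_peak {y : X} {τ : ℝ} (hy : y ∈ s) (hτ : τ ∈ Icc 0 T) :
      u y τ - ε * τ ≤ u x₀ t₀ - ε * t₀ :=
    hq (show (y, τ) ∈ s ×ˢ Icc 0 T from ⟨hy, hτ⟩)
  by_contra! habove
  have peak_above : A < u x₀ t₀ - ε * t₀ := habove.trans_le (le_peak hx ht)
  have ht₀_pos : 0 < t₀ := by
    refine ht₀.1.lt_of_ne' fun h => ?_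
    rw [h, mul_zero, sub_zero] at peak_above
    exact peak_above.not_ge (hinit x₀ hx₀)
  have space_max : IsMaxOn (u · t₀) s x₀ := fun y hy =>
    (sub_le_sub_iff_right (ε * t₀)).1 (le_peak hy ht₀)
  have time_max : IsMaxOn (fun τ => u x₀ τ - ε * τ) (Icc 0 T) t₀ := fun τ hτ => le_peak hx₀ hτ
  have time_deriv : HasDerivWithinAt (fun τ => u x₀ τ - ε * τ) (u' x₀ t₀ - ε) (Icc 0 T) t₀ := by
    simpa using (hderiv x₀ hx₀ t₀ ht₀).fun_sub ((hasDerivWithinAt_id t₀ _).const_mul ε)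
  have backwards := time_max.localize.hasFDerivWithinAt_nonpos time_deriv.hasFDerivWithinAt
    (sub_mem_posTangentConeAt_of_segment_subset ((convex_Icc 0 T).segment_subset ht₀
      ⟨le_rfl, ht₀.1.trans ht₀.2⟩))
  have fermat : ε ≤ u' x₀ t₀ := by
    simp only [ContinuousLinearMap.toSpanSingleton_apply, smul_eq_mul] at backwards
    nlinarith
  linarith [hmax t₀ ht₀ x₀ hx₀ space_max (by linarith [mul_pos hε ht₀_pos])]

lemma exists_le_of_le_deriv_of_isMaxOn {X : Type*} [TopologicalSpace X] {s : Set X}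
    (hs : IsCompact s) {u u' : X → ℝ → ℝ} {T φ c : ℝ} (hT : 0 ≤ T) (hc : 0 ≤ c)
    (hcont : ContinuousOn (fun q : X × ℝ => u q.1 q.2) (s ×ˢ Icc 0 T))
    (hderiv : ∀ x ∈ s, ∀ t ∈ Icc 0 T, HasDerivWithinAt (u x) (u' x t) (Icc 0 T) t)
    (hmax : ∀ t ∈ Icc 0 T, ∀ x ∈ s, IsMaxOn (u · t) s x → φ < u x t → c ≤ u' x t)
    {x₀ : X} (hx₀ : x₀ ∈ s) (hinit : φ < u x₀ 0) : ∃ x ∈ s, φ + c * T ≤ u x T := by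
  by_contra! hend
  have reverse_mem {τ : ℝ} (hτ : τ ∈ Icc 0 T) : T - τ ∈ Icc 0 T :=
    ⟨sub_nonneg.2 hτ.2, sub_le_self T hτ.1⟩
  have reversed := le_of_deriv_nonpos_of_isMaxOn hs (u := fun x τ => u x (T - τ) + c * τ)
    (u' := fun x τ => -u' x (T - τ) + c) (T := T) (A := φ + c * T) ?_ ?_ ?_ ?_
    (right_mem_Icc.2 hT) hx₀
  · simp only [sub_self] at reversed
    linarith
  · refine (hcont.comp (f := fun q : X × ℝ => (q.1, T - q.2)) (by fun_prop)
      fun q hq => ⟨hq.1, reverse_mem hq.2⟩).add (by fun_prop)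
  · intro x hx τ hτ
    have hrev := (hderiv x hx (T - τ) (reverse_mem hτ)).scomp τ
      ((hasDerivWithinAt_id τ (Icc 0 T)).const_sub T) fun _ => reverse_mem
    simpa [Function.comp_def] using hrev.fun_add ((hasDerivWithinAt_id τ _).const_mul c)
  · intro τ hτ x hx hxmax habove
    have reversed_max : IsMaxOn (u · (T - τ)) s x := fun y hy => by
      simpa using hxmax hy
    have := hmax (T - τ) (reverse_mem hτ) x hx reversed_max
      (by nlinarith [mul_le_mul_of_nonneg_left hτ.2 hc])
    linarith
  · intro x hx
    simpa using (hend x hx).le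

/-! ### The sawtooth transform -/

/-- The transform `∫ f (X + y) (L - y) dy` over one period `2L` of `f`, whose kernel is one tooth of
a sawtooth wave. Its growth at spatial maxima drives the blow-up. -/
noncomputable def sawtooth (L : ℝ) (f : ℝ → ℝ) (X : ℝ) : ℝ :=
  ∫ y in (0 : ℝ)..2 * L, f (X + y) * (L - y)

lemma intervalIntegral_const_add_of_periodic {E : Type*} [NormedAddCommGroup E] [NormedSpace ℝ E]
    {g : ℝ → E} {p : ℝ} (hg : Function.Periodic g p) (x : ℝ) :
    ∫ y in (0 : ℝ)..p, g (x + y) = ∫ y in (0 : ℝ)..p, g y := by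
  simpa using hg.intervalIntegral_add_eq x 0

section Sawtooth

variable {L A : ℝ} {f : ℝ → ℝ}

lemma sawtooth_eq_integral (L : ℝ) (f : ℝ → ℝ) (X : ℝ) :
    sawtooth L f X = ∫ u in X..X + 2 * L, f u * (L + X - u) := by
  have shift := intervalIntegral.integral_comp_add_left (a := 0) (b := 2 * L)
    (fun u => f u * (L + X - u)) X
  rw [add_zero] at shift
  rw [sawtooth, ← shift]
  congr 1 with y
  ring

lemma sawtooth_sub {g : ℝ → ℝ} {X : ℝ} (hf : IntervalIntegrable f volume X (X + 2 * L))
    (hg : IntervalIntegrable g volume X (X + 2 * L)) :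
    sawtooth L (fun x => f x - g x) X = sawtooth L f X - sawtooth L g X := by
  have tooth : ContinuousOn (fun u => L + X - u) (uIcc X (X + 2 * L)) := by fun_prop
  simp only [sawtooth_eq_integral, sub_mul (f _)]
  exact intervalIntegral.integral_sub (hf.mul_continuousOn tooth) (hg.mul_continuousOn tooth)

lemma sawtooth_periodic (hp : Function.Periodic f (2 * L)) :
    Function.Periodic (sawtooth L f) (2 * L) := fun X => by
  simp only [sawtooth, add_right_comm X, hp (X + _)]

lemma abs_sawtooth_le (hL : 0 ≤ L) (hA : ∀ x, |f x| ≤ A) (X : ℝ) :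
    |sawtooth L f X| ≤ 2 * L ^ 2 * A := by
  have hbound : ∀ y ∈ uIoc 0 (2 * L), ‖f (X + y) * (L - y)‖ ≤ A * L := by
    intro y hy
    rw [uIoc_of_le (by linarith)] at hy
    rw [norm_mul]
    exact mul_le_mul (hA _) (abs_le.2 ⟨by linarith [hy.2], by linarith [hy.1]⟩) (norm_nonneg _)
      ((abs_nonneg _).trans (hA 0))
  calc |sawtooth L f X| ≤ A * L * |2 * L - 0| :=
        intervalIntegral.norm_integral_le_of_norm_le_const hbound
    _ = 2 * L ^ 2 * A := by
        rw [sub_zero, abs_of_nonneg (by linarith)]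
        ring

lemma hasDerivAt_sawtooth (hf : Continuous f) (hp : Function.Periodic f (2 * L)) (X : ℝ) :
    HasDerivAt (sawtooth L f) ((∫ y in (0 : ℝ)..2 * L, f y) - 2 * L * f X) X := by
  have decomposition (X : ℝ) : sawtooth L f X =
      (L + X) * (∫ y in (0 : ℝ)..2 * L, f y) - ∫ u in X..X + 2 * L, u * f u := by
    have mean := hp.intervalIntegral_add_eq X 0
    rw [zero_add] at mean
    rw [sawtooth_eq_integral, ← mean, ← intervalIntegral.integral_const_mul,
      ← intervalIntegral.integral_sub (Continuous.intervalIntegrable (by fun_prop) _ _)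
        (Continuous.intervalIntegrable (by fun_prop) _ _)]
    congr 1 with u
    ring
  have moment := hasDerivAt_integral_add_const (g := fun u => u * f u) (by fun_prop) (2 * L) X
  rw [funext decomposition]
  refine ((((hasDerivAt_id X).const_add L).mul_const _).fun_sub moment).congr_deriv ?_
  rw [hp X]
  ring

lemma lipschitzWith_sawtooth (hL : 0 ≤ L) (hf : Continuous f) (hp : Function.Periodic f (2 * L))
    (hA : ∀ x, |f x| ≤ A) : LipschitzWith (4 * L * A).toNNReal (sawtooth L f) := by
  have hA₀ : 0 ≤ A := (abs_nonneg _).trans (hA 0)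
  refine lipschitzWith_of_nnnorm_deriv_le
    (fun X => (hasDerivAt_sawtooth hf hp X).differentiableAt) fun X => ?_
  rw [← NNReal.coe_le_coe, coe_nnnorm, Real.coe_toNNReal _ (by positivity),
    (hasDerivAt_sawtooth hf hp X).deriv]
  have mean_le : ‖∫ y in (0 : ℝ)..2 * L, f y‖ ≤ A * |2 * L - 0| :=
    intervalIntegral.norm_integral_le_of_norm_le_const fun y _ => hA y
  rw [sub_zero, abs_of_nonneg (by linarith)] at mean_le
  calc ‖(∫ y in (0 : ℝ)..2 * L, f y) - 2 * L * f X‖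
      ≤ ‖∫ y in (0 : ℝ)..2 * L, f y‖ + ‖2 * L * f X‖ := norm_sub_le _ _
    _ ≤ A * (2 * L) + 2 * L * A := by
        rw [norm_mul, Real.norm_of_nonneg (show 0 ≤ 2 * L by linarith)]
        gcongr
        exact hA X
    _ = 4 * L * A := by ring

lemma sawtooth_deriv {X : ℝ} (hf : AbsolutelyContinuousOnInterval f X (X + 2 * L))
    (hp : Function.Periodic f (2 * L)) :
    sawtooth L (deriv f) X = (∫ y in (0 : ℝ)..2 * L, f y) - 2 * L * f X := by
  have tooth : AbsolutelyContinuousOnInterval (fun u => L + X - u) X (X + 2 * L) :=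
    ContDiffOn.absolutelyContinuousOnInterval (by fun_prop)
  have mean := hp.intervalIntegral_add_eq X 0
  rw [zero_add] at mean
  have tooth_deriv : deriv (fun u => L + X - u) = fun _ => -1 := by
    ext u
    simp
  have parts := tooth.integral_mul_deriv_eq_deriv_mul hf
  rw [tooth_deriv, intervalIntegral.integral_const_mul, mean, hp X] at parts
  simp only [sawtooth_eq_integral, mul_comm (deriv f _), parts]
  ring

lemma sawtooth_mul_deriv {K : ℝ≥0} (hK : LipschitzWith K f) (hf : Differentiable ℝ f)
    (hp : Function.Periodic f (2 * L)) (X : ℝ) :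
    sawtooth L (fun x => f x * deriv f x) X =
      (∫ y in (0 : ℝ)..2 * L, f y ^ 2) / 2 - L * f X ^ 2 := by
  have ac : AbsolutelyContinuousOnInterval f X (X + 2 * L) :=
    hK.lipschitzOnWith.absolutelyContinuousOnInterval
  have ac_sq : AbsolutelyContinuousOnInterval (fun x => 2⁻¹ * (f x * f x)) X (X + 2 * L) :=
    (ac.fun_mul ac).const_mul 2⁻¹
  have deriv_sq : deriv (fun x => 2⁻¹ * (f x * f x)) = fun x => f x * deriv f x := by
    ext x
    rw [(((hf x).hasDerivAt.fun_mul (hf x).hasDerivAt).const_mul 2⁻¹).deriv]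
    ring
  have hp_sq : Function.Periodic (fun x => 2⁻¹ * (f x * f x)) (2 * L) := fun x => by
    simp only [hp x]
  rw [← deriv_sq, sawtooth_deriv ac_sq hp_sq, intervalIntegral.integral_const_mul]
  simp only [← sq]
  ring

lemma sq_sawtooth_le (hL : 0 ≤ L) (hf : Continuous f) (hp : Function.Periodic f (2 * L))
    (X m : ℝ) :
    3 * sawtooth L f X ^ 2 ≤ 2 * L ^ 3 * ∫ y in (0 : ℝ)..2 * L, (f y - m) ^ 2 := by
  have integral_tooth : ∫ y in (0 : ℝ)..2 * L, (L - y) = 0 := by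
    rw [intervalIntegral.integral_comp_sub_left (fun y => y), integral_id]
    ring
  have integral_tooth_sq : ∫ y in (0 : ℝ)..2 * L, (L - y) ^ 2 = 2 * L ^ 3 / 3 := by
    rw [intervalIntegral.integral_comp_sub_left (fun y => y ^ 2), integral_pow]
    ring
  have centered : sawtooth L f X = ∫ y in (0 : ℝ)..2 * L, (f (X + y) - m) * (L - y) := by
    simp only [sub_mul _ m]
    rw [intervalIntegral.integral_sub (Continuous.intervalIntegrable (by fun_prop) _ _)
      (Continuous.intervalIntegrable (by fun_prop) _ _), intervalIntegral.integral_const_mul,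
      integral_tooth, mul_zero, sub_zero, sawtooth]
  have cauchy_schwarz := sq_intervalIntegral_mul_le (a := 0) (b := 2 * L) (by linarith)
    (f := fun y => f (X + y) - m) (g := fun y => L - y) (by fun_prop) (by fun_prop)
  have hp_sq : Function.Periodic (fun y => (f y - m) ^ 2) (2 * L) := fun y => by simp only [hp y]
  rw [← centered, integral_tooth_sq, intervalIntegral_const_add_of_periodic hp_sq]
    at cauchy_schwarz
  linarith

/-- At a critical point of the transform, `f` takes its mean value. -/
lemma sq_sawtooth_le_sawtooth_mul_deriv {K : ℝ≥0} (hL : 0 ≤ L) (hK : LipschitzWith K f)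
    (hf : Differentiable ℝ f) (hp : Function.Periodic f (2 * L)) {X : ℝ}
    (hX : deriv (sawtooth L f) X = 0) :
    3 * sawtooth L f X ^ 2 ≤ 4 * L ^ 3 * sawtooth L (fun x => f x * deriv f x) X := by
  have hf_cont := hf.continuous
  have mean : ∫ y in (0 : ℝ)..2 * L, f y = 2 * L * f X := by
    rw [(hasDerivAt_sawtooth hf_cont hp X).deriv] at hX
    linarith
  have variance : ∫ y in (0 : ℝ)..2 * L, (f y - f X) ^ 2 =
      2 * sawtooth L (fun x => f x * deriv f x) X := by
    calc ∫ y in (0 : ℝ)..2 * L, (f y - f X) ^ 2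
        = ∫ y in (0 : ℝ)..2 * L, (f y ^ 2 - 2 * f X * f y + f X ^ 2) := by
          congr 1 with y
          ring
      _ = (∫ y in (0 : ℝ)..2 * L, f y ^ 2) - 2 * f X * (2 * L * f X) + 2 * L * f X ^ 2 := by
          rw [intervalIntegral.integral_add (Continuous.intervalIntegrable (by fun_prop) _ _)
            (Continuous.intervalIntegrable (by fun_prop) _ _),
            intervalIntegral.integral_sub (Continuous.intervalIntegrable (by fun_prop) _ _)
            (Continuous.intervalIntegrable (by fun_prop) _ _),
            intervalIntegral.integral_const_mul, mean]
          simp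
      _ = 2 * sawtooth L (fun x => f x * deriv f x) X := by
          rw [sawtooth_mul_deriv hK hf hp]
          ring
  have := sq_sawtooth_le hL hf_cont hp X (f X)
  rw [variance] at this
  linarith

lemma sawtooth_sin (hL : L ≠ 0) (A : ℝ) :
    sawtooth L (fun x => A * Real.sin (Real.pi / L * x)) 0 = 2 * A * L ^ 2 / Real.pi := by
  have hc : Real.pi / L ≠ 0 := div_ne_zero Real.pi_ne_zero hL
  have full_turn : Real.pi / L * (2 * L) = 2 * Real.pi := by field_simp
  set g : ℝ → ℝ := fun x => -(A * L / Real.pi) * Real.cos (Real.pi / L * x) with hg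
  have deriv_g : deriv g = fun x => A * Real.sin (Real.pi / L * x) := by
    ext x
    have hd : HasDerivAt g _ x :=
      (((hasDerivAt_id x).const_mul (Real.pi / L)).cos).const_mul (-(A * L / Real.pi))
    rw [hd.deriv, id_eq]
    field_simp
  have hp : Function.Periodic g (2 * L) := fun x => by
    simp only [hg, mul_add, full_turn, Real.cos_add_two_pi]
  have mean : ∫ y in (0 : ℝ)..2 * L, g y = 0 := by
    rw [intervalIntegral.integral_const_mul, intervalIntegral.integral_comp_mul_left _ hc,
      integral_cos, full_turn]
    simp
  rw [← deriv_g, sawtooth_deriv (ContDiffOn.absolutelyContinuousOnInterval (by fun_prop)) hp, mean]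
  simp only [hg, mul_zero, Real.cos_zero]
  ring

lemma sawtooth_fracLaplacian {α : ℝ} {K : ℝ≥0} (hα₀ : 0 < α) (hα : α < 1 / 2)
    (hf : LipschitzWith K f) (hA : ∀ x, |f x| ≤ A) (X : ℝ) :
    sawtooth L (fracLaplacian α f) X = fracLaplacian α (sawtooth L f) X :=
  intervalIntegral_fracLaplacian_mul hα₀ hα hf hA (Continuous.intervalIntegrable (by fun_prop) _ _)
    X

lemma hasDerivWithinAt_sawtooth {s : Set ℝ} (hs : Convex ℝ s) (hL : 0 ≤ L) {θ R : ℝ → ℝ → ℝ}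
    {C : ℝ} (hθ : ∀ t ∈ s, Continuous (θ · t))
    (hderiv : ∀ t ∈ s, ∀ x, HasDerivWithinAt (θ x) (R x t) s t)
    (hR : ∀ t ∈ s, ∀ x, |R x t| ≤ C) (X : ℝ) {t : ℝ} (ht : t ∈ s) :
    HasDerivWithinAt (fun t => sawtooth L (θ · t) X) (sawtooth L (R · t) X) s t := by
  have integrableOn_tooth {h : ℝ → ℝ} (hh : Continuous h) : IntegrableOn h (Ioc 0 (2 * L)) :=
    (hh.intervalIntegrable 0 (2 * L)).1
  simp only [sawtooth, intervalIntegral.integral_of_le (show 0 ≤ 2 * L by linarith)]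
  refine hasDerivWithinAt_integral_of_dominated hs (bound := fun y => C * |L - y|)
    (fun t ht => ?_) (integrableOn_tooth (by fun_prop)) (fun t ht y => ?_)
    (fun t ht y => (hderiv t ht (X + y)).mul_const _) ht
  · have hθt := hθ t ht
    exact integrableOn_tooth (by fun_prop)
  · rw [norm_mul]
    exact mul_le_mul_of_nonneg_right (hR t ht _) (norm_nonneg _)

end Sawtooth

/-! ### The Burgers equation -/

/-- The right-hand side `θ ∂ₓθ - (-Δ)^α θ` of the fractional Burgers equation. -/
noncomputable def burgersRhs (α : ℝ) (f : ℝ → ℝ) (x : ℝ) : ℝ :=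
  f x * deriv f x - fracLaplacian α f x

section BurgersRhs

variable {α A L : ℝ} {K : ℝ≥0} {f : ℝ → ℝ}

lemma burgersRhs_nonpos_of_forall_le (α : ℝ) {x : ℝ} (hx : ∀ y, f y ≤ f x) :
    burgersRhs α f x ≤ 0 := by
  have critical : deriv f x = 0 := IsLocalMax.deriv_eq_zero (Eventually.of_forall hx)
  rw [burgersRhs, critical, mul_zero, zero_sub, neg_nonpos]
  exact fracLaplacian_nonneg_of_forall_le α hx

lemma burgersRhs_nonneg_of_forall_ge (α : ℝ) {x : ℝ} (hx : ∀ y, f x ≤ f y) :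
    0 ≤ burgersRhs α f x := by
  have critical : deriv f x = 0 := IsLocalMin.deriv_eq_zero (Eventually.of_forall hx)
  rw [burgersRhs, critical, mul_zero, zero_sub, ← fracLaplacian_neg]
  exact fracLaplacian_nonneg_of_forall_le α fun y => neg_le_neg (hx y)

lemma abs_burgersRhs_le (hα₀ : 0 < α) (hα : α < 1 / 2) (hf : LipschitzWith K f)
    (hA : ∀ x, |f x| ≤ A) (x : ℝ) :
    |burgersRhs α f x| ≤ A * K + (K + 2 * A) * kernelMass α := by
  refine (abs_sub _ _).trans (add_le_add ?_ (abs_fracLaplacian_le hα₀ hα hf hA x))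
  rw [abs_mul]
  exact mul_le_mul (hA x) (norm_deriv_le_of_lipschitz hf) (abs_nonneg _)
    ((abs_nonneg _).trans (hA 0))

lemma sawtooth_burgersRhs (hα₀ : 0 < α) (hα : α < 1 / 2) (hf : LipschitzWith K f)
    (hA : ∀ x, |f x| ≤ A) (X : ℝ) :
    sawtooth L (burgersRhs α f) X =
      sawtooth L (fun x => f x * deriv f x) X - fracLaplacian α (sawtooth L f) X := by
  have ac : AbsolutelyContinuousOnInterval f X (X + 2 * L) :=
    hf.lipschitzOnWith.absolutelyContinuousOnInterval
  rw [← sawtooth_fracLaplacian hα₀ hα hf hA]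
  exact sawtooth_sub (ac.intervalIntegrable_deriv.continuousOn_mul hf.continuous.continuousOn)
    ((continuous_fracLaplacian hα₀ hα hf hA).intervalIntegrable _ _)

lemma le_sawtooth_burgersRhs (hα₀ : 0 < α) (hα : α < 1 / 2) (hL : 0 < L) (hK : LipschitzWith K f)
    (hf : Differentiable ℝ f) (hp : Function.Periodic f (2 * L)) (hA : ∀ x, |f x| ≤ A) {X : ℝ}
    (hX : ∀ Y, sawtooth L f Y ≤ sawtooth L f X) :
    3 * sawtooth L f X ^ 2 / (4 * L ^ 3) - 4 * L * (1 + L) * A * kernelMass α ≤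
      sawtooth L (burgersRhs α f) X := by
  have hA₀ : 0 ≤ A := (abs_nonneg _).trans (hA 0)
  have critical : deriv (sawtooth L f) X = 0 := IsLocalMax.deriv_eq_zero (Eventually.of_forall hX)
  have transport := sq_sawtooth_le_sawtooth_mul_deriv hL.le hK hf hp critical
  rw [← div_le_iff₀' (by positivity)] at transport
  have dissipation := (le_abs_self _).trans (abs_fracLaplacian_le hα₀ hα
    (lipschitzWith_sawtooth hL.le hf.continuous hp hA) (abs_sawtooth_le hL.le hA) X)
  rw [Real.coe_toNNReal _ (by positivity)] at dissipation
  rw [sawtooth_burgersRhs hα₀ hα hK hA]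
  linarith

end BurgersRhs

/-- Solutions `θ x t` of the fractional Burgers equation on `ℝ × [0, T]` that are `2L`-periodic and
differentiable in `x`, with gradient bounded by `K` uniformly in time. The initial datum is left
free. -/
structure IsLipschitzSolution (α L T : ℝ) (K : ℝ≥0) (θ : ℝ → ℝ → ℝ) : Prop where
  periodic : ∀ t ∈ Icc 0 T, Function.Periodic (θ · t) (2 * L)
  differentiable : ∀ t ∈ Icc 0 T, Differentiable ℝ (θ · t)
  lipschitzWith : ∀ t ∈ Icc 0 T, LipschitzWith K (θ · t)
  hasDerivWithinAt : ∀ t ∈ Icc 0 T, ∀ x,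
    HasDerivWithinAt (θ x) (burgersRhs α (θ · t) x) (Icc 0 T) t

lemma isLipschitzSolution_of_tendsto {α L T A : ℝ} {K : ℝ≥0} {θ Lθ : ℝ → ℝ → ℝ}
    (hα₀ : 0 < α) (hα : α < 1 / 2) (hp : ∀ t ∈ Icc 0 T, Function.Periodic (θ · t) (2 * L))
    (hdiff : ∀ t ∈ Icc 0 T, Differentiable ℝ (θ · t))
    (hA : ∀ t ∈ Icc 0 T, ∀ x, |θ x t| ≤ A)
    (hK : ∀ t ∈ Icc 0 T, ∀ x, |deriv (θ · t) x| ≤ K)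
    (hLθ : ∀ t ∈ Icc 0 T, ∀ x, Tendsto (fun ε => ∫ y in {y : ℝ | ε < |y|},
      (θ x t - θ (x + y) t) / |y| ^ (1 + 2 * α)) (𝓝[>] 0) (𝓝 (Lθ x t)))
    (hderiv : ∀ t ∈ Icc 0 T, ∀ x,
      HasDerivWithinAt (θ x) (θ x t * deriv (θ · t) x - Lθ x t) (Icc 0 T) t) :
    IsLipschitzSolution α L T K θ where
  periodic := hp
  differentiable := hdiff
  lipschitzWith t ht := lipschitzWith_of_nnnorm_deriv_le (hdiff t ht) (hK t ht)
  hasDerivWithinAt t ht x := by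
    have hlip := lipschitzWith_of_nnnorm_deriv_le (hdiff t ht) (hK t ht)
    have principal_value : Lθ x t = fracLaplacian α (θ · t) x :=
      tendsto_nhds_unique (hLθ t ht x) (tendsto_setIntegral_lt_abs
        (integrable_fracLaplacian_integrand hα₀ hα hlip (hA t ht) x))
    rw [burgersRhs, ← principal_value]
    exact hderiv t ht x

namespace IsLipschitzSolution

variable {α L T A : ℝ} {K : ℝ≥0} {θ : ℝ → ℝ → ℝ}

lemma continuousOn (h : IsLipschitzSolution α L T K θ) (s : Set ℝ) :
    ContinuousOn (fun q : ℝ × ℝ => θ q.1 q.2) (s ×ˢ Icc 0 T) :=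
  continuousOn_prod_of_continuousOn_lipschitzOnWith _ K
    (fun x _ t ht => (h.hasDerivWithinAt t ht x).continuousWithinAt)
    fun t ht => (h.lipschitzWith t ht).lipschitzOnWith

lemma le_of_le (h : IsLipschitzSolution α L T K θ) (hL : 0 < L) (hA : ∀ x, θ x 0 ≤ A) {t : ℝ}
    (ht : t ∈ Icc 0 T) (x : ℝ) : θ x t ≤ A := by
  obtain ⟨x', hx', hxx'⟩ := (h.periodic t ht).exists_mem_Ico₀ (by linarith) x
  refine hxx'.trans_le (le_of_deriv_nonpos_of_isMaxOn isCompact_Icc (h.continuousOn (Icc 0 (2 * L)))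
    (fun x _ t ht => h.hasDerivWithinAt t ht x) (fun t ht x _ hmax _ => ?_) (fun x _ => hA x) ht
    (Ico_subset_Icc_self hx'))
  exact burgersRhs_nonpos_of_forall_le α
    (le_of_isMaxOn_Icc_of_periodic (by linarith) (h.periodic t ht) hmax)

lemma ge_of_ge (h : IsLipschitzSolution α L T K θ) (hL : 0 < L) (hA : ∀ x, A ≤ θ x 0) {t : ℝ}
    (ht : t ∈ Icc 0 T) (x : ℝ) : A ≤ θ x t := by
  obtain ⟨x', hx', hxx'⟩ := (h.periodic t ht).exists_mem_Ico₀ (by linarith) x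
  refine (neg_le_neg_iff.1 (le_of_deriv_nonpos_of_isMaxOn isCompact_Icc
    (u := fun x t => -θ x t) (h.continuousOn (Icc 0 (2 * L))).neg
    (fun x _ t ht => (h.hasDerivWithinAt t ht x).fun_neg) (fun t ht x _ hmax _ => ?_)
    (fun x _ => neg_le_neg (hA x)) ht (Ico_subset_Icc_self hx'))).trans_eq hxx'.symm
  have hmin := le_of_isMaxOn_Icc_of_periodic (f := fun x => -θ x t) (by linarith)
    (fun x => congrArg Neg.neg (h.periodic t ht x)) hmax
  exact neg_nonpos.2 (burgersRhs_nonneg_of_forall_ge α fun y => neg_le_neg_iff.1 (hmin y))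

lemma abs_le_of_abs_le (h : IsLipschitzSolution α L T K θ) (hL : 0 < L) (hA : ∀ x, |θ x 0| ≤ A)
    {t : ℝ} (ht : t ∈ Icc 0 T) (x : ℝ) : |θ x t| ≤ A :=
  abs_le.2 ⟨h.ge_of_ge hL (fun x => (abs_le.1 (hA x)).1) ht x,
    h.le_of_le hL (fun x => (abs_le.1 (hA x)).2) ht x⟩

lemma hasDerivWithinAt_sawtooth (h : IsLipschitzSolution α L T K θ) (hα₀ : 0 < α) (hα : α < 1 / 2)
    (hL : 0 < L) (hA : ∀ x, |θ x 0| ≤ A) (X : ℝ) {t : ℝ} (ht : t ∈ Icc 0 T) :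
    HasDerivWithinAt (fun t => sawtooth L (θ · t) X) (sawtooth L (burgersRhs α (θ · t)) X)
      (Icc 0 T) t :=
  FractionalBurgers.hasDerivWithinAt_sawtooth (convex_Icc 0 T) hL.le
    (R := fun x t => burgersRhs α (θ · t) x)
    (fun t ht => (h.differentiable t ht).continuous) h.hasDerivWithinAt
    (fun _ ht => abs_burgersRhs_le hα₀ hα (h.lipschitzWith _ ht) (h.abs_le_of_abs_le hL hA ht)) X ht

/-- The left-hand side is reached by the transform at time `T`, and the right-hand side is its a
priori bound. -/
lemma add_mul_le_of_lt_sawtooth (h : IsLipschitzSolution α L T K θ) (hα₀ : 0 < α) (hα : α < 1 / 2)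
    (hL : 0 < L) (hT : 0 ≤ T) (hA : ∀ x, |θ x 0| ≤ A) {φ c X₀ : ℝ} (hφ : 0 ≤ φ) (hc : 0 ≤ c)
    (hrate : c ≤ 3 * φ ^ 2 / (4 * L ^ 3) - 4 * L * (1 + L) * A * kernelMass α)
    (hX₀ : φ < sawtooth L (θ · 0) X₀) : φ + c * T ≤ 2 * L ^ 2 * A := by
  have θ_le {t : ℝ} (ht : t ∈ Icc 0 T) : ∀ x, |θ x t| ≤ A := h.abs_le_of_abs_le hL hA ht
  have periodic {t : ℝ} (ht : t ∈ Icc 0 T) : Function.Periodic (sawtooth L (θ · t)) (2 * L) :=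
    sawtooth_periodic (h.periodic t ht)
  have time_deriv (X : ℝ) {t : ℝ} (ht : t ∈ Icc 0 T) :=
    h.hasDerivWithinAt_sawtooth hα₀ hα hL hA X ht
  have cont : ContinuousOn (fun q : ℝ × ℝ => sawtooth L (θ · q.2) q.1)
      (Icc 0 (2 * L) ×ˢ Icc 0 T) :=
    continuousOn_prod_of_continuousOn_lipschitzOnWith _ (4 * L * A).toNNReal
      (fun X _ t ht => (time_deriv X ht).continuousWithinAt)
      fun t ht => (lipschitzWith_sawtooth hL.le (h.differentiable t ht).continuous
        (h.periodic t ht) (θ_le ht)).lipschitzOnWith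
  have growth : ∀ t ∈ Icc 0 T, ∀ X ∈ Icc 0 (2 * L), IsMaxOn (sawtooth L (θ · t)) (Icc 0 (2 * L)) X →
      φ < sawtooth L (θ · t) X → c ≤ sawtooth L (burgersRhs α (θ · t)) X := by
    intro t ht X _ hmax hX
    calc c ≤ 3 * φ ^ 2 / (4 * L ^ 3) - 4 * L * (1 + L) * A * kernelMass α := hrate
      _ ≤ 3 * sawtooth L (θ · t) X ^ 2 / (4 * L ^ 3) - 4 * L * (1 + L) * A * kernelMass α := by
        gcongr
      _ ≤ sawtooth L (burgersRhs α (θ · t)) X :=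
        le_sawtooth_burgersRhs hα₀ hα hL (h.lipschitzWith t ht) (h.differentiable t ht)
          (h.periodic t ht) (θ_le ht)
          (le_of_isMaxOn_Icc_of_periodic (by linarith) (periodic ht) hmax)
  obtain ⟨X₁, hX₁, hX₀₁⟩ := (periodic (left_mem_Icc.2 hT)).exists_mem_Ico₀ (by linarith) X₀
  obtain ⟨X, -, hX⟩ := exists_le_of_le_deriv_of_isMaxOn isCompact_Icc
    (u := fun X t => sawtooth L (θ · t) X) hT hc cont (fun X _ t ht => time_deriv X ht) growth
    (Ico_subset_Icc_self hX₁) (hX₀.trans_eq hX₀₁)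
  exact hX.trans ((le_abs_self _).trans (abs_sawtooth_le hL.le (θ_le (right_mem_Icc.2 hT)) X))

end IsLipschitzSolution

end FractionalBurgers

open FractionalBurgers

theorem supercritical_burgers_blowup_general {α L T : ℝ} (hα₀ : 0 < α) (hα : α < 1 / 2)
    (hL : 0 < L) (hT : 0 < T) :
    ∃ θ₀ : ℝ → ℝ, ContDiff ℝ (⊤ : ℕ∞) θ₀ ∧ Function.Periodic θ₀ (2 * L) ∧
      ¬ ∃ (K : ℝ≥0) (θ : ℝ → ℝ → ℝ), IsLipschitzSolution α L T K θ ∧ ∀ x, θ x 0 = θ₀ x := by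
  have hM := kernelMass_nonneg α
  -- the amplitude for which a transform of size `L²A/2` grows at rate `2L²A/T`
  set A : ℝ := 16 / 3 * (4 * (1 + L) * kernelMass α + 2 * L / T) with hA
  have hA_pos : 0 < A := by positivity
  refine ⟨fun x => A * Real.sin (Real.pi / L * x), by fun_prop, fun x => ?_, ?_⟩
  · have full_turn : Real.pi / L * (2 * L) = 2 * Real.pi := by field_simp
    simp only [mul_add, full_turn, Real.sin_add_two_pi]
  rintro ⟨K, θ, hθ, hinit⟩
  have abs_init_le (x : ℝ) : |θ x 0| ≤ A := by
    rw [hinit, abs_mul, abs_of_pos hA_pos]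
    exact mul_le_of_le_one_right hA_pos.le (Real.abs_sin_le_one _)
  have init_large : L ^ 2 * A / 2 < sawtooth L (θ · 0) 0 := by
    rw [funext hinit, sawtooth_sin hL.ne', div_lt_div_iff₀ two_pos Real.pi_pos]
    nlinarith [Real.pi_lt_four, mul_pos (pow_pos hL 2) hA_pos]
  have rate : 2 * L ^ 2 * A / T =
      3 * (L ^ 2 * A / 2) ^ 2 / (4 * L ^ 3) - 4 * L * (1 + L) * A * kernelMass α := by
    rw [hA]
    field_simp
    ring
  have overshoot := hθ.add_mul_le_of_lt_sawtooth hα₀ hα hL hT.le abs_init_le (by positivity)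
    (by positivity) rate.le init_large
  rw [div_mul_cancel₀ _ hT.ne'] at overshoot
  nlinarith [mul_pos (pow_pos hL 2) hA_pos]

/-- **Finite time blow up for the supercritical Burgers equation.**
For `0 < α < 1/2` there are a period `2L`, a time `T > 0`, and smooth `2L`-periodic initial
data `θ₀` such that no classical solution `θ` of `∂_t θ = θ ∂_x θ − L_α θ` on `ℝ × [0,T]`,
`2L`-periodic and `C³` in `x` with uniformly bounded `C³` norm, `C¹` in `t`, can start
from `θ₀`: any solution must lose `C³` regularity by time `T`. -/
theorem supercritical_burgers_blowup (α : ℝ) (hα0 : 0 < α) (hα : α < 1/2) :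
    ∃ L > (0:ℝ), ∃ T > (0:ℝ), ∃ θ₀ : ℝ → ℝ,
      ContDiff ℝ (⊤ : ℕ∞) θ₀ ∧ Function.Periodic θ₀ (2 * L) ∧
      ¬ ∃ θ Lθ : ℝ → ℝ → ℝ,
        (∀ t ∈ Icc (0:ℝ) T, ∀ x, θ (x + 2 * L) t = θ x t) ∧
        (∀ t ∈ Icc (0:ℝ) T, ContDiff ℝ 3 (fun x => θ x t)) ∧
        (∃ N : ℝ, ∀ t ∈ Icc (0:ℝ) T, ∀ j ≤ 3, ∀ x,
          |iteratedDeriv j (fun x' => θ x' t) x| ≤ N) ∧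
        (∀ x, ContinuousOn (fun t => θ x t * deriv (fun x' => θ x' t) x - Lθ x t)
          (Icc 0 T)) ∧
        (∀ t ∈ Icc (0:ℝ) T, ∀ x,
          Tendsto (fun ε => ∫ y in {y : ℝ | ε < |y|},
              (θ x t - θ (x + y) t) / |y| ^ (1 + 2*α))
            (nhdsWithin 0 (Ioi 0)) (nhds (Lθ x t))) ∧
        (∀ x, ∀ t ∈ Icc (0:ℝ) T,
          HasDerivWithinAt (fun s => θ x s)
            (θ x t * deriv (fun x' => θ x' t) x - Lθ x t) (Icc 0 T) t) ∧
        (∀ x, θ x 0 = θ₀ x) := by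
  obtain ⟨θ₀, hsmooth, hperiodic, hnone⟩ :=
    supercritical_burgers_blowup_general hα0 hα one_pos one_pos
  refine ⟨1, one_pos, 1, one_pos, θ₀, hsmooth, hperiodic, ?_⟩
  rintro ⟨θ, Lθ, hp, hC3, ⟨N, hN⟩, -, hLθ, hderiv, hinit⟩
  refine hnone ⟨N.toNNReal, θ, ?_, hinit⟩
  exact isLipschitzSolution_of_tendsto hα0 hα hp
    (fun t ht => (hC3 t ht).differentiable (by norm_num))
    (fun t ht x => by simpa using hN t ht 0 (by norm_num) x)
    (fun t ht x => by simpa using (hN t ht 1 (by norm_num) x).trans N.le_coe_toNNReal)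
    hLθ (fun t ht x => hderiv x t ht)
end

section
/- Weighted integral inequalities (Lemma fracestlem): Let 0 < δ < 1 and let f : [0,∞) → ℝ be continuous, continuously differentiable on (0,∞), bounded, with f(0) = 0. Then: (i) there exist constants C₁ > 0 and C₂ > 0 depending only on δ such that ∫_0^∞ f(x)²/x^{2+δ} dx ≥ C₁ ( ∫_0^∞ |f(x)|/x^{1+δ} dx )² − C₂ (1 + ‖f‖_{L^∞}²); and (ii) if in addition 0 < α < 1/4 and 0 < δ < 1 − 4α, then for every ε > 0 there exists C_ε > 0 (depending on ε, α, δ) such that ∫_0^∞ |f(x)|/x^{1+δ+2α} dx ≤ ε ∫_0^∞ f(x)²/x^{2+δ} dx + C_ε (1 + ‖f‖_{L^∞}). In both inequalities, if an integral on the larger side is infinite the inequality holds trivially, and the inequalities are understood in the extended reals. -/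
open Set MeasureTheory ENNReal

/-!
Write `J = ∫₀^∞ f² / x ^ b` and split `∫₀^∞ |f| / x ^ a` at `x = 1`. Near zero, Cauchy–Schwarz gives
`∫₀¹ |f| / x ^ a ≤ (J K) ^ (1 / 2)` with `K = ∫₀¹ x ^ (b - 2 * a) = 1 / (b + 1 - 2 * a)`; away from
zero, `∫₁^∞ |f| / x ^ a ≤ M / (a - 1)`. Squaring the resulting bound gives the first inequality,
and `(J K) ^ (1 / 2) ≤ ε J + K / ε` gives the second.
The paper's exponents are `b = 2 + δ` with `a = 1 + δ` and `a = 1 + δ + 2 * α`.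
-/

section ExtendedNonnegReal

variable {A B J c : ℝ≥0∞}

lemma rpow_half_sq (x : ℝ≥0∞) : (x ^ (1 / 2 : ℝ)) ^ 2 = x := by
  simp [← ENNReal.rpow_mul_natCast]

lemma add_sq_le_two_mul_sq_add_sq (x y : ℝ≥0∞) : (x + y) ^ 2 ≤ 2 * (x ^ 2 + y ^ 2) := by
  simpa [show (2 : ℝ) - 1 = 1 by norm_num] using
    ENNReal.rpow_add_le_mul_rpow_add_rpow x y one_le_two

lemma mul_rpow_half_le_add (x y : ℝ≥0∞) : (x * y) ^ (1 / 2 : ℝ) ≤ x + y := by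
  rw [← ENNReal.pow_le_pow_left_iff two_ne_zero, rpow_half_sq, sq]
  exact mul_le_mul' le_self_add le_add_self

lemma half_mul_sq_le_of_le_rpow_half_add (h : A ≤ (J / c) ^ (1 / 2 : ℝ) + B) :
    c / 2 * A ^ 2 ≤ J + c * B ^ 2 := by
  have hsq : A ^ 2 ≤ 2 * (J / c + B ^ 2) := by
    calc A ^ 2 ≤ ((J / c) ^ (1 / 2 : ℝ) + B) ^ 2 := by gcongr
      _ ≤ 2 * (((J / c) ^ (1 / 2 : ℝ)) ^ 2 + B ^ 2) := add_sq_le_two_mul_sq_add_sq _ _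
      _ = 2 * (J / c + B ^ 2) := by rw [rpow_half_sq]
  calc c / 2 * A ^ 2 ≤ c / 2 * (2 * (J / c + B ^ 2)) := by gcongr
    _ = c * (J / c) + c * B ^ 2 := by
      rw [← mul_assoc, ENNReal.div_mul_cancel two_ne_zero ofNat_ne_top, mul_add]
    _ ≤ J + c * B ^ 2 := by
      gcongr
      exact ENNReal.mul_div_le

lemma le_mul_add_of_le_rpow_half_add {ε : ℝ≥0∞} (hε : ε ≠ 0) (hε' : ε ≠ ∞)
    (h : A ≤ (J / c) ^ (1 / 2 : ℝ) + B) : A ≤ ε * J + (ε⁻¹ / c + B) := by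
  have hprod : J / c = ε * J * (ε⁻¹ / c) := by
    rw [← mul_div_assoc, mul_right_comm, ENNReal.mul_inv_cancel hε hε', one_mul]
  rw [← add_assoc]
  refine h.trans (add_le_add_left ?_ B)
  rw [hprod]
  exact mul_rpow_half_le_add _ _

end ExtendedNonnegReal

lemma lintegral_Ioc_zero_rpow {p c : ℝ} (hp : -1 < p) (hc : 0 ≤ c) :
    ∫⁻ x in Ioc 0 c, ENNReal.ofReal (x ^ p) = ENNReal.ofReal (c ^ (p + 1) / (p + 1)) := by
  have hint : IntegrableOn (fun x : ℝ ↦ x ^ p) (Ioc 0 c) :=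
    (intervalIntegrable_iff_integrableOn_Ioc_of_le hc).1
      (intervalIntegral.intervalIntegrable_rpow' hp)
  rw [← ofReal_integral_eq_lintegral_ofReal hint
      (ae_restrict_of_forall_mem measurableSet_Ioc fun x hx ↦ Real.rpow_nonneg hx.1.le p),
    ← intervalIntegral.integral_of_le hc, integral_rpow (Or.inl hp),
    Real.zero_rpow (by linarith), sub_zero]

lemma lintegral_Ioi_rpow {p c : ℝ} (hp : p < -1) (hc : 0 < c) :
    ∫⁻ x in Ioi c, ENNReal.ofReal (x ^ p) = ENNReal.ofReal (-c ^ (p + 1) / (p + 1)) := by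
  rw [← ofReal_integral_eq_lintegral_ofReal (integrableOn_Ioi_rpow_of_lt hp hc)
      (ae_restrict_of_forall_mem measurableSet_Ioi fun x hx ↦
        Real.rpow_nonneg (hc.trans hx).le p),
    integral_Ioi_rpow_of_lt hp hc]

lemma ofReal_div_rpow_eq_mul_rpow_half {x y : ℝ} (hx : 0 < x) (hy : 0 ≤ y) (a b : ℝ) :
    ENNReal.ofReal (y / x ^ a) =
      ENNReal.ofReal (y ^ 2 / x ^ b) ^ (1 / 2 : ℝ) *
        ENNReal.ofReal (x ^ (b - 2 * a)) ^ (1 / 2 : ℝ) := by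
  have hsq : y ^ 2 / x ^ b * x ^ (b - 2 * a) = (y / x ^ a) ^ 2 := by
    rw [Real.rpow_sub hx, mul_comm 2 a, Real.rpow_mul hx.le, Real.rpow_two]
    field_simp
  rw [← ENNReal.mul_rpow_of_nonneg _ _ (by positivity), ← ENNReal.ofReal_mul (by positivity), hsq,
    ENNReal.ofReal_rpow_of_nonneg (by positivity) (by positivity), ← Real.sqrt_eq_rpow,
    Real.sqrt_sq (by positivity)]

section WeightedIntegrals

variable {E : Type*} [NormedAddCommGroup E] {f : ℝ → E} {s : Set ℝ}

lemma setLIntegral_norm_div_rpow_le_mul_rpow_half (hs : MeasurableSet s) (hs0 : s ⊆ Ioi 0)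
    (hf : AEStronglyMeasurable f (volume.restrict s)) (a b : ℝ) :
    ∫⁻ x in s, ENNReal.ofReal (‖f x‖ / x ^ a) ≤
      (∫⁻ x in s, ENNReal.ofReal (‖f x‖ ^ 2 / x ^ b)) ^ (1 / 2 : ℝ) *
        (∫⁻ x in s, ENNReal.ofReal (x ^ (b - 2 * a))) ^ (1 / 2 : ℝ) := by
  have hmeas : AEMeasurable (fun x ↦ ENNReal.ofReal (‖f x‖ ^ 2 / x ^ b)) (volume.restrict s) := by
    have := hf.norm.aemeasurable
    fun_prop
  rw [setLIntegral_congr_fun hs fun x hx ↦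
    ofReal_div_rpow_eq_mul_rpow_half (hs0 hx) (norm_nonneg (f x)) a b]
  exact lintegral_mul_norm_pow_le hmeas (by fun_prop) (by norm_num) (by norm_num) (by norm_num)

lemma setLIntegral_norm_div_rpow_le_mul {M : ℝ} (hs : MeasurableSet s) (hs0 : s ⊆ Ioi 0)
    (hM : ∀ᵐ x ∂volume.restrict s, ‖f x‖ ≤ M) (a : ℝ) :
    ∫⁻ x in s, ENNReal.ofReal (‖f x‖ / x ^ a) ≤
      ENNReal.ofReal M * ∫⁻ x in s, ENNReal.ofReal (x ^ (-a)) := by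
  rw [← lintegral_const_mul' _ _ ENNReal.ofReal_ne_top]
  refine lintegral_mono_ae ?_
  filter_upwards [hM, ae_restrict_mem hs] with x hx hxs
  have hx0 : 0 < x := hs0 hxs
  rw [← ENNReal.ofReal_mul' (by positivity), Real.rpow_neg hx0.le, ← div_eq_mul_inv]
  gcongr

variable {a b M : ℝ}

lemma nonneg_of_ae_norm_le_Ioi (hM : ∀ᵐ x ∂volume.restrict (Ioi 0), ‖f x‖ ≤ M) : 0 ≤ M := by
  have : NeZero (volume (Ioi (0 : ℝ))) := ⟨by simp⟩
  obtain ⟨x, hx⟩ := hM.exists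
  exact (norm_nonneg (f x)).trans hx

lemma lintegral_norm_div_rpow_le_rpow_half_add (ha : 1 < a) (hab : 2 * a < b + 1)
    (hf : AEStronglyMeasurable f (volume.restrict (Ioi 0)))
    (hM : ∀ᵐ x ∂volume.restrict (Ioi 0), ‖f x‖ ≤ M) :
    ∫⁻ x in Ioi 0, ENNReal.ofReal (‖f x‖ / x ^ a) ≤
      ((∫⁻ x in Ioi 0, ENNReal.ofReal (‖f x‖ ^ 2 / x ^ b)) /
        ENNReal.ofReal (b + 1 - 2 * a)) ^ (1 / 2 : ℝ) + ENNReal.ofReal (M / (a - 1)) := by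
  have hnear_sub : Ioc (0 : ℝ) 1 ⊆ Ioi 0 := Ioc_subset_Ioi_self
  have hfar_sub : Ioi (1 : ℝ) ⊆ Ioi 0 := Ioi_subset_Ioi zero_le_one
  have hnear : ∫⁻ x in Ioc (0 : ℝ) 1, ENNReal.ofReal (‖f x‖ / x ^ a) ≤
      ((∫⁻ x in Ioi 0, ENNReal.ofReal (‖f x‖ ^ 2 / x ^ b)) /
        ENNReal.ofReal (b + 1 - 2 * a)) ^ (1 / 2 : ℝ) := by
    refine (setLIntegral_norm_div_rpow_le_mul_rpow_half measurableSet_Ioc hnear_sub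
      (hf.mono_set hnear_sub) a b).trans ?_
    rw [lintegral_Ioc_zero_rpow (by linarith) zero_le_one, Real.one_rpow, sub_add_eq_add_sub,
      one_div (b + 1 - 2 * a), ENNReal.ofReal_inv_of_pos (by linarith),
      ← ENNReal.mul_rpow_of_nonneg _ _ (by positivity), ← div_eq_mul_inv]
    gcongr
  have hfar : ∫⁻ x in Ioi (1 : ℝ), ENNReal.ofReal (‖f x‖ / x ^ a) ≤
      ENNReal.ofReal (M / (a - 1)) := by
    refine (setLIntegral_norm_div_rpow_le_mul measurableSet_Ioi hfar_sub
      (ae_restrict_of_ae_restrict_of_subset hfar_sub hM) a).trans_eq ?_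
    have hconst : -1 / (-a + 1) = (a - 1)⁻¹ := by
      rw [neg_add_eq_sub, ← neg_sub a, neg_div_neg_eq, one_div]
    rw [lintegral_Ioi_rpow (by linarith) one_pos, Real.one_rpow, hconst,
      ← ENNReal.ofReal_mul' (inv_nonneg.2 (by linarith)), ← div_eq_mul_inv]
  rw [← Ioc_union_Ioi_eq_Ioi (zero_le_one' ℝ),
    lintegral_union measurableSet_Ioi (Ioc_disjoint_Ioi le_rfl), Ioc_union_Ioi_eq_Ioi zero_le_one]
  exact add_le_add hnear hfar

lemma mul_sq_lintegral_norm_div_rpow_le (ha : 1 < a) (hab : 2 * a < b + 1)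
    (hf : AEStronglyMeasurable f (volume.restrict (Ioi 0)))
    (hM : ∀ᵐ x ∂volume.restrict (Ioi 0), ‖f x‖ ≤ M) :
    ENNReal.ofReal ((b + 1 - 2 * a) / 2) *
        (∫⁻ x in Ioi 0, ENNReal.ofReal (‖f x‖ / x ^ a)) ^ 2 ≤
      (∫⁻ x in Ioi 0, ENNReal.ofReal (‖f x‖ ^ 2 / x ^ b)) +
        ENNReal.ofReal ((b + 1 - 2 * a) / (a - 1) ^ 2 * M ^ 2) := by
  have hM0 : 0 ≤ M := nonneg_of_ae_norm_le_Ioi hM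
  have hc : 0 ≤ b + 1 - 2 * a := by linarith
  have hfar : 0 ≤ M / (a - 1) := div_nonneg hM0 (by linarith)
  have hconst : (b + 1 - 2 * a) / (a - 1) ^ 2 * M ^ 2 = (b + 1 - 2 * a) * (M / (a - 1)) ^ 2 := by
    rw [div_pow, mul_div_assoc', div_mul_eq_mul_div]
  rw [hconst, ENNReal.ofReal_mul hc, ENNReal.ofReal_pow hfar, ENNReal.ofReal_div_of_pos two_pos,
    ENNReal.ofReal_ofNat]
  exact half_mul_sq_le_of_le_rpow_half_add (lintegral_norm_div_rpow_le_rpow_half_add ha hab hf hM)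

lemma lintegral_norm_div_rpow_le_mul_add {ε : ℝ} (hε : 0 < ε) (ha : 1 < a) (hab : 2 * a < b + 1)
    (hf : AEStronglyMeasurable f (volume.restrict (Ioi 0)))
    (hM : ∀ᵐ x ∂volume.restrict (Ioi 0), ‖f x‖ ≤ M) :
    ∫⁻ x in Ioi 0, ENNReal.ofReal (‖f x‖ / x ^ a) ≤
      ENNReal.ofReal ε * (∫⁻ x in Ioi 0, ENNReal.ofReal (‖f x‖ ^ 2 / x ^ b)) +
        ENNReal.ofReal (ε⁻¹ / (b + 1 - 2 * a) + M / (a - 1)) := by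
  have hM0 : 0 ≤ M := nonneg_of_ae_norm_le_Ioi hM
  have hc : 0 < b + 1 - 2 * a := by linarith
  rw [ENNReal.ofReal_add (by positivity) (div_nonneg hM0 (by linarith)),
    ENNReal.ofReal_div_of_pos hc, ENNReal.ofReal_inv_of_pos hε]
  exact le_mul_add_of_le_rpow_half_add (ENNReal.ofReal_pos.2 hε).ne' ENNReal.ofReal_ne_top
    (lintegral_norm_div_rpow_le_rpow_half_add ha hab hf hM)

end WeightedIntegrals

theorem weighted_integral_inequalities_general {E : Type*} [NormedAddCommGroup E] {a b : ℝ}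
    (ha : 1 < a) (hab : 2 * a < b + 1) :
    (∃ C₁ > (0 : ℝ), ∃ C₂ > (0 : ℝ), ∀ (f : ℝ → E) (M : ℝ),
      AEStronglyMeasurable f (volume.restrict (Ioi 0)) →
      (∀ᵐ x ∂volume.restrict (Ioi 0), ‖f x‖ ≤ M) →
      ENNReal.ofReal C₁ * (∫⁻ x in Ioi 0, ENNReal.ofReal (‖f x‖ / x ^ a)) ^ 2 ≤
        (∫⁻ x in Ioi 0, ENNReal.ofReal (‖f x‖ ^ 2 / x ^ b)) +
          ENNReal.ofReal (C₂ * (1 + M ^ 2))) ∧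
    (∀ ε > (0 : ℝ), ∃ Cε > (0 : ℝ), ∀ (f : ℝ → E) (M : ℝ),
      AEStronglyMeasurable f (volume.restrict (Ioi 0)) →
      (∀ᵐ x ∂volume.restrict (Ioi 0), ‖f x‖ ≤ M) →
      ∫⁻ x in Ioi 0, ENNReal.ofReal (‖f x‖ / x ^ a) ≤
        ENNReal.ofReal ε * (∫⁻ x in Ioi 0, ENNReal.ofReal (‖f x‖ ^ 2 / x ^ b)) +
          ENNReal.ofReal (Cε * (1 + M))) := by
  have hc : 0 < b + 1 - 2 * a := by linarith
  have ha' : 0 < a - 1 := by linarith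
  refine ⟨⟨(b + 1 - 2 * a) / 2, half_pos hc, (b + 1 - 2 * a) / (a - 1) ^ 2,
    div_pos hc (pow_pos ha' 2),
    fun f M hf hM ↦ (mul_sq_lintegral_norm_div_rpow_le ha hab hf hM).trans ?_⟩,
    fun ε hε ↦ ⟨ε⁻¹ / (b + 1 - 2 * a) + (a - 1)⁻¹,
      add_pos (div_pos (inv_pos.2 hε) hc) (inv_pos.2 ha'),
      fun f M hf hM ↦ (lintegral_norm_div_rpow_le_mul_add hε ha hab hf hM).trans ?_⟩⟩
  · gcongr
    linarith
  · have hM0 : 0 ≤ M := nonneg_of_ae_norm_le_Ioi hM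
    rw [add_mul, div_eq_inv_mul M]
    gcongr
    · exact le_mul_of_one_le_right (by positivity) (by linarith)
    · linarith

/-- **Weighted integral inequalities (Lemma fracestlem).**
For `0 < δ < 1` and `f` continuous on `[0,∞)`, `C¹` on `(0,∞)`, bounded by `M`, with `f 0 = 0`:
(i) `∫ f²/x^{2+δ} ≥ C₁ (∫ |f|/x^{1+δ})² − C₂(1+M²)`, and
(ii) if moreover `0 < α < 1/4` and `δ < 1−4α`, then for every `ε > 0` there is `C_ε` with
`∫ |f|/x^{1+δ+2α} ≤ ε ∫ f²/x^{2+δ} + C_ε (1+M)`.  The inequalities are stated in the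
extended reals (via `lintegral`), with the subtraction in (i) moved to the other side. -/
theorem weighted_integral_inequalities (δ : ℝ) (hδ0 : 0 < δ) (hδ1 : δ < 1) :
    (∃ C₁ > (0:ℝ), ∃ C₂ > (0:ℝ), ∀ (f : ℝ → ℝ) (M : ℝ), 0 ≤ M →
      ContinuousOn f (Ici 0) → ContDiffOn ℝ 1 f (Ioi 0) → f 0 = 0 →
      (∀ x ∈ Ici (0:ℝ), |f x| ≤ M) →
      ENNReal.ofReal C₁ * (∫⁻ x in Ioi (0:ℝ), ENNReal.ofReal (|f x| / x ^ (1 + δ))) ^ (2:ℕ)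
        ≤ (∫⁻ x in Ioi (0:ℝ), ENNReal.ofReal (f x ^ (2:ℕ) / x ^ (2 + δ)))
            + ENNReal.ofReal (C₂ * (1 + M ^ (2:ℕ)))) ∧
    (∀ α : ℝ, 0 < α → α < 1/4 → δ < 1 - 4*α → ∀ ε > (0:ℝ), ∃ Cε > (0:ℝ),
      ∀ (f : ℝ → ℝ) (M : ℝ), 0 ≤ M →
      ContinuousOn f (Ici 0) → ContDiffOn ℝ 1 f (Ioi 0) → f 0 = 0 →
      (∀ x ∈ Ici (0:ℝ), |f x| ≤ M) →
      (∫⁻ x in Ioi (0:ℝ), ENNReal.ofReal (|f x| / x ^ (1 + δ + 2*α)))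
        ≤ ENNReal.ofReal ε * (∫⁻ x in Ioi (0:ℝ), ENNReal.ofReal (f x ^ (2:ℕ) / x ^ (2 + δ)))
            + ENNReal.ofReal (Cε * (1 + M))) := by
  have hgen {a : ℝ} (ha : 1 < a) (hab : 2 * a < 2 + δ + 1) :=
    weighted_integral_inequalities_general (E := ℝ) ha hab
  simp only [Real.norm_eq_abs, sq_abs] at hgen
  have hmeas {f : ℝ → ℝ} (hf : ContinuousOn f (Ici 0)) :
      AEStronglyMeasurable f (volume.restrict (Ioi 0)) :=
    (hf.mono Ioi_subset_Ici_self).aestronglyMeasurable measurableSet_Ioi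
  have hbound {f : ℝ → ℝ} {M : ℝ} (hM : ∀ x ∈ Ici (0 : ℝ), |f x| ≤ M) :
      ∀ᵐ x ∂volume.restrict (Ioi 0), |f x| ≤ M :=
    ae_restrict_of_forall_mem measurableSet_Ioi fun x hx ↦ hM x (Ioi_subset_Ici_self hx)
  refine ⟨?_, fun α hα _ hδα ε hε ↦ ?_⟩
  · obtain ⟨C₁, hC₁, C₂, hC₂, h⟩ := (hgen (a := 1 + δ) (by linarith) (by linarith)).1
    exact ⟨C₁, hC₁, C₂, hC₂, fun f M _ hf _ _ hM ↦ h f M (hmeas hf) (hbound hM)⟩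
  · obtain ⟨Cε, hCε, h⟩ := (hgen (a := 1 + δ + 2 * α) (by linarith) (by linarith)).2 ε hε
    exact ⟨Cε, hCε, fun f M _ hf _ _ hM ↦ h f M (hmeas hf) (hbound hM)⟩
end
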